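/- arXiv:1311.0363 — 2 statements merged into one kernel-verified Lean document; each statement's English description precedes it below -/
import Mathlib

section
/- Let F be a non-normalizable term whose unique free variable is x, with x ∈ βΩ(F), and let A be a closed term such that F[x:=A] ≄ F[x:=Ω]. Let (F_k) be a cofinal recursive reduction sequence of F and let T be the associated tree. Then T has an infinite branch that is good, i.e. an infinite branch such that for each k the occurrence of x in F_k chosen by the branch is good in F_k. -/
/-! ## A de Bruijn presentation of the untyped λ-calculus -/

/-- Untyped λ-terms in de Bruijn representation. -/
inductive Lam : Type where
  | var : ℕ → Lam
  | app : Lam → Lam → Lam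
  | abs : Lam → Lam
  deriving DecidableEq

namespace Lam

/-- Lifting of de Bruijn indices (cutoff `d`). -/
def lift (d : ℕ) : Lam → Lam
  | var n => if n < d then var n else var (n + 1)
  | app a b => app (lift d a) (lift d b)
  | abs a => abs (lift (d + 1) a)

/-- Capture-avoiding substitution of `u` for the free variable `k`. -/
def subst : Lam → ℕ → Lam → Lam
  | var n, k, u => if n = k then u else if k < n then var (n - 1) else var n
  | app a b, k, u => app (subst a k u) (subst b k u)
  | abs a, k, u => abs (subst a (k + 1) (lift 0 u))

/-- One-step β-reduction `▷`. -/
inductive Step : Lam → Lam → Prop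
  | beta (a b : Lam) : Step (app (abs a) b) (subst a 0 b)
  | appL {a a' : Lam} (b : Lam) : Step a a' → Step (app a b) (app a' b)
  | appR (a : Lam) {b b' : Lam} : Step b b' → Step (app a b) (app a b')
  | abs {a a' : Lam} : Step a a' → Step (Lam.abs a) (Lam.abs a')

/-- β-reduction `▷*` : reflexive and transitive closure of `▷`. -/
def Steps : Lam → Lam → Prop := Relation.ReflTransGen Step

/-- β-normal term. -/
def Normal (t : Lam) : Prop := ∀ t', ¬ Step t t'

/-- `Free x t` : the variable `x` (de Bruijn index, seen from the root) occurs free in `t`. -/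
def Free : ℕ → Lam → Prop
  | x, var n => x = n
  | x, app a b => Free x a ∨ Free x b
  | x, abs a => Free (x + 1) a

/-- Closed term. -/
def Closed (t : Lam) : Prop := ∀ x, ¬ Free x t

/-- A variable applied to a (possibly empty) list of arguments. -/
inductive HeadVarApp : Lam → Prop
  | var (n : ℕ) : HeadVarApp (var n)
  | app {a : Lam} (b : Lam) : HeadVarApp a → HeadVarApp (app a b)

/-- Head normal forms `λx₁…λxₙ.(y t₁ … tₘ)`. -/
inductive IsHNF : Lam → Prop
  | head {t : Lam} : HeadVarApp t → IsHNF t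
  | abs {a : Lam} : IsHNF a → IsHNF (Lam.abs a)

/-- A term is solvable if it β-reduces to a head normal form. -/
def Solvable (t : Lam) : Prop := ∃ h, Steps t h ∧ IsHNF h

/-- `Ω = (λx.(x x))(λx.(x x))`. -/
def Omega : Lam := app (abs (app (var 0) (var 0))) (abs (app (var 0) (var 0)))

/-- Ω-reduction `▷_Ω` : replace an unsolvable subterm by `Ω`. -/
inductive OmegaStep : Lam → Lam → Prop
  | unsolv {t : Lam} : ¬ Solvable t → OmegaStep t Omega
  | appL {a a' : Lam} (b : Lam) : OmegaStep a a' → OmegaStep (app a b) (app a' b)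
  | appR (a : Lam) {b b' : Lam} : OmegaStep b b' → OmegaStep (app a b) (app a b')
  | abs {a a' : Lam} : OmegaStep a a' → OmegaStep (Lam.abs a) (Lam.abs a')

/-- `▷_Ω*`. -/
def OmegaSteps : Lam → Lam → Prop := Relation.ReflTransGen OmegaStep

/-- `▷_{βΩ}` : union of `▷` and `▷_Ω`. -/
def BOStep (t t' : Lam) : Prop := Step t t' ∨ OmegaStep t t'

/-- `▷_{βΩ}*`. -/
def BOSteps : Lam → Lam → Prop := Relation.ReflTransGen BOStep

/-- `u ≃ v` : equality in the λ-theory H (common `▷_{βΩ}*`-reduct). -/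
def SimH (u v : Lam) : Prop := ∃ w, BOSteps u w ∧ BOSteps v w

/-- Simultaneous (parallel) substitution along `σ`. -/
def psubst (σ : ℕ → Lam) : Lam → Lam
  | var n => σ n
  | app a b => app (psubst σ a) (psubst σ b)
  | abs a => abs (psubst (fun n => match n with | 0 => var 0 | m + 1 => lift 0 (σ m)) a)

/-- `(x V)` : the application of a head `h` to a list of arguments. -/
def mkApps (h : Lam) (as : List Lam) : Lam := as.foldl app h

/-- `U ⊑ V` : some initial segment of `V` is obtained from `U` by a substitution
followed by componentwise β-reductions. -/
def Sqsubseteq (U V : List Lam) : Prop :=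
  ∃ (σ : ℕ → Lam) (W : List Lam), W <+: V ∧
    List.Forall₂ (fun u w => Steps (psubst σ u) w) U W

/-! ### Occurrences as positions -/

/-- Directions inside a term. -/
inductive Dir : Type where
  | left | right | down
  deriving DecidableEq

/-- Positions (occurrences) in a term. -/
abbrev Pos := List Dir

/-- The subterm of `t` at position `p` (if any). -/
def subtermAt : Lam → Pos → Option Lam
  | t, [] => some t
  | app a _, Dir.left :: p => subtermAt a p
  | app _ b, Dir.right :: p => subtermAt b p
  | abs a, Dir.down :: p => subtermAt a p
  | _, _ :: _ => none

/-- Replace the subterm of `t` at position `p` by `s` (if the position exists). -/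
def replaceAt : Lam → Pos → Lam → Option Lam
  | _, [], s => some s
  | app a b, Dir.left :: p, s => (replaceAt a p s).map (fun a' => app a' b)
  | app a b, Dir.right :: p, s => (replaceAt b p s).map (fun b' => app a b')
  | abs a, Dir.down :: p, s => (replaceAt a p s).map Lam.abs
  | _, _ :: _, _ => none

/-- `OccOf x t p` : position `p` is an occurrence in `t` of the free variable `x`
(index seen from the root, hence shifted by the number of binders crossed). -/
def OccOf (x : ℕ) (t : Lam) (p : Pos) : Prop :=
  subtermAt t p = some (var (x + p.count Dir.down))

/-- `ArgOf t p V` : `V` is the maximal list of arguments, in `t`, of the occurrence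
sitting at position `p`; i.e. `([] V)` is the applicative context of that occurrence. -/
def ArgOf (t : Lam) (p : Pos) (V : List Lam) : Prop :=
  ∃ (q : Pos) (h : Lam),
    p = q ++ List.replicate V.length Dir.left ∧
    (∀ q' : Pos, q ≠ q' ++ [Dir.left]) ∧
    subtermAt t q = some (mkApps h V) ∧ subtermAt t p = some h

/-- `InArgOfOcc x t p q` : `q` is an occurrence of `x` in `t` and the position `p` lies
inside one of the elements of `Arg(x_[q], t)`. -/
def InArgOfOcc (x : ℕ) (t : Lam) (p q : Pos) : Prop :=
  OccOf x t q ∧ ∃ (r : Pos) (n : ℕ),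
    q = r ++ List.replicate n Dir.left ∧
    (∀ r' : Pos, r ≠ r' ++ [Dir.left]) ∧
    ∃ (j : ℕ) (s : Pos), j < n ∧ p = r ++ List.replicate j Dir.left ++ Dir.right :: s

/-- The occurrence `p` of `x` is pure in `t` : no other occurrence `q` of `x` in `t`
is such that `p` occurs in one of the elements of `Arg(x_[q], t)`. -/
def PureOcc (x : ℕ) (t : Lam) (p : Pos) : Prop :=
  OccOf x t p ∧ ∀ q, q ≠ p → ¬ InArgOfOcc x t p q

/-- Renaming of the free variable `y` into `x`. -/
def rename (y x : ℕ) : Lam → Lam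
  | var n => if n = y then var x else var n
  | app a b => app (rename y x a) (rename y x b)
  | abs a => abs (rename (y + 1) (x + 1) a)

/-- `Residue x u v p p'` : along some β-reduction from `u` to `v`, the occurrence `p'` of
`x` in `v` is a residue (traced copy) of the occurrence `p` of `x` in `u`.  This is
expressed by marking the occurrence `p` of `x` with a fresh variable `y` and tracing the
occurrences of `y`. -/
def Residue (x : ℕ) (u v : Lam) (p p' : Pos) : Prop :=
  ∃ (y : ℕ) (u₀ v₀ : Lam),
    ¬ Free y u ∧
    replaceAt u p (var (y + p.count Dir.down)) = some u₀ ∧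
    Steps u₀ v₀ ∧ rename y x v₀ = v ∧ OccOf y v₀ p'

/-- The occurrence `p` of the free variable `0` ("x") in `G` is good with respect to the
closed term `A` : it is pure in `G` and `u[x:=A]` is solvable for every subterm `u` of
`G` in which this occurrence occurs. -/
def GoodOcc (A G : Lam) (p : Pos) : Prop :=
  PureOcc 0 G p ∧
    ∀ (q : Pos) (u : Lam), q <+: p → subtermAt G q = some u →
      Solvable (subst u (q.count Dir.down) A)

/-! ### Miscellaneous -/

/-- A fixed effective Gödel numbering of λ-terms. -/
def code : Lam → ℕ
  | var n => Nat.pair 0 n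
  | app a b => Nat.pair 1 (Nat.pair (code a) (code b))
  | abs a => Nat.pair 2 (code a)

/-- Body `f^k z` of the Church numeral. -/
def churchBody : ℕ → Lam
  | 0 => var 0
  | k + 1 => app (var 1) (churchBody k)

/-- The Church numeral `c_k = λf λz.(f^k z)`. -/
def church (k : ℕ) : Lam := abs (abs (churchBody k))

/-- `n`-fold abstraction `λx₁…λxₙ.t`. -/
def absN : ℕ → Lam → Lam
  | 0, t => t
  | n + 1, t => abs (absN n t)

/-- Number of symbols of a term. -/
def size : Lam → ℕ
  | var _ => 1
  | app a b => size a + size b + 1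
  | abs a => size a + 1

/-- Subterm relation. -/
inductive Subterm : Lam → Lam → Prop
  | refl (t : Lam) : Subterm t t
  | appL {s a : Lam} (b : Lam) : Subterm s a → Subterm s (app a b)
  | appR (a : Lam) {s b : Lam} : Subterm s b → Subterm s (app a b)
  | abs {s a : Lam} : Subterm s a → Subterm s (Lam.abs a)

/-- `t` contains no subterm of the form `(x u)` for the free variable `x`. -/
def NoVarApp : ℕ → Lam → Prop
  | _, var _ => True
  | x, app a b => a ≠ var x ∧ NoVarApp x a ∧ NoVarApp x b
  | x, abs a => NoVarApp (x + 1) a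

/-- Headed by the variable `d` : term of the form `(x V)` with `x = var d`. -/
inductive Headed : ℕ → Lam → Prop
  | var (d : ℕ) : Headed d (var d)
  | app {d : ℕ} {a : Lam} (b : Lam) : Headed d a → Headed d (app a b)

end Lam

/-!
An occurrence is good when it is pure and no subterm around it becomes unsolvable under
`[x:=A]`. Two facts about good occurrences give the theorem.

* Every reduct `G` of `F` has one. Otherwise each occurrence of `x` in `G` lies inside an argument
  of another occurrence of `x` or inside a subterm whose `[x:=A]`-instance is unsolvable. In the
  former case follow the enclosing occurrences outwards: an outermost one is pure, so it too lies
  in such a subterm. By genericity the `[x:=Ω]`-instance of such a subterm is unsolvable as well, so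
  replacing these subterms by `Ω` turns `G[x:=A]` and `G[x:=Ω]` into the same term, and
  `F[x:=A] ≃ F[x:=Ω]`.
* If `G ▷* G'`, every good occurrence in `G'` is a residue of a good occurrence in `G`, since purity
  and solvability of the enclosing subterms are both reflected by reduction.

The good occurrences thus form a sequence of finite nonempty sets in which every element of one
level has a parent in the previous level, and König's lemma yields a branch.
-/

namespace Lam

variable {a a' b b' s s' t t' u u' v v' w A U : Lam} {d i j k n x y z : ℕ} {p p' q q' r : Pos}

/-! ### Lifting and substitution -/

theorem lift_lift (h : i ≤ j) : lift i (lift j t) = lift (j + 1) (lift i t) := by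
  induction t generalizing i j with
  | var n =>
    simp only [lift]
    split_ifs <;> simp only [lift] <;> split_ifs <;> first | rfl | omega
  | app a b iha ihb => simp only [lift, iha h, ihb h]
  | abs a ih => simp only [lift, ih (Nat.succ_le_succ h)]

theorem lift_subst_of_ge (h : k ≤ d) :
    lift d (subst t k u) = subst (lift (d + 1) t) k (lift d u) := by
  induction t generalizing d k u with
  | var n =>
    simp only [lift, subst]
    split_ifs <;> simp only [lift, subst] <;> split_ifs <;>
      first | rfl | omega | (congr 1; omega)
  | app a b iha ihb => simp only [lift, subst, iha h, ihb h]
  | abs a ih => simp only [lift, subst, ih (Nat.succ_le_succ h), lift_lift d.zero_le]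

theorem lift_subst_of_le (h : d ≤ k) :
    lift d (subst t k u) = subst (lift d t) (k + 1) (lift d u) := by
  induction t generalizing d k u with
  | var n =>
    simp only [lift, subst]
    split_ifs <;> simp only [lift, subst] <;> split_ifs <;>
      first | rfl | omega | (congr 1; omega)
  | app a b iha ihb => simp only [lift, subst, iha h, ihb h]
  | abs a ih => simp only [lift, subst, ih (Nat.succ_le_succ h), lift_lift d.zero_le]

theorem subst_lift : subst (lift k t) k u = t := by
  induction t generalizing k u with
  | var n =>
    simp only [lift]
    split_ifs <;> simp only [subst] <;> split_ifs <;> first | rfl | omega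
  | app a b iha ihb => simp only [lift, subst, iha, ihb]
  | abs a ih => simp only [lift, subst, ih]

theorem subst_subst (h : j ≤ k) :
    subst (subst t j u) k v = subst (subst t (k + 1) (lift j v)) j (subst u k v) := by
  induction t generalizing j k u v with
  | var n =>
    simp only [subst]
    by_cases hn : n = k + 1
    · subst hn
      rw [if_neg (by omega), if_pos (by omega), if_pos rfl, subst_lift]
      simp only [subst, Nat.add_sub_cancel, if_true]
    · rw [if_neg hn]
      split_ifs <;> simp only [subst] <;> split_ifs <;>
        first | rfl | omega
  | app a b iha ihb => simp only [subst, iha h, ihb h]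
  | abs a ih =>
    simp only [subst, ih (Nat.succ_le_succ h), lift_lift j.zero_le, lift_subst_of_le k.zero_le]

theorem lift_eq_self_of_not_free (h : ∀ y, d ≤ y → ¬ Free y t) : lift d t = t := by
  induction t generalizing d with
  | var n => exact if_pos (not_le.1 fun hn => h n hn rfl)
  | app a b iha ihb =>
    rw [lift, iha fun y hy hf => h y hy (.inl hf), ihb fun y hy hf => h y hy (.inr hf)]
  | abs a ih =>
    rw [lift, ih]
    rintro (_ | y) hy
    · omega
    · exact h y (Nat.le_of_succ_le_succ hy)

theorem Closed.lift_eq (hA : Closed A) (d : ℕ) : lift d A = A :=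
  lift_eq_self_of_not_free fun y _ => hA y

theorem Closed.subst_abs (hA : Closed A) : subst (abs a) k A = abs (subst a (k + 1) A) := by
  rw [subst, hA.lift_eq]

theorem closed_Omega : Closed Omega := by
  simp [Closed, Omega, Free]

/-! ### Weak head reduction and standardization -/

theorem Steps.app (ha : Steps a a') (hb : Steps b b') : Steps (Lam.app a b) (Lam.app a' b') :=
  .trans (Relation.ReflTransGen.lift (Lam.app · b) (fun _ _ => Step.appL b) _ _ ha)
    (Relation.ReflTransGen.lift (Lam.app a') (fun _ _ => Step.appR a') _ _ hb)

theorem Steps.abs (h : Steps a a') : Steps (Lam.abs a) (Lam.abs a') :=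
  Relation.ReflTransGen.lift Lam.abs (fun _ _ => Step.abs) _ _ h

theorem Step.subst (h : Step t t') : Step (t.subst k u) (t'.subst k u) := by
  induction h generalizing k u with
  | beta a b =>
    rw [subst_subst k.zero_le]
    exact .beta _ _
  | appL b _ ih => exact .appL _ ih
  | appR a _ ih => exact .appR _ ih
  | abs _ ih => exact .abs ih

theorem Steps.subst (h : Steps t t') (k : ℕ) (u : Lam) : Steps (t.subst k u) (t'.subst k u) :=
  Relation.ReflTransGen.lift (Lam.subst · k u) (fun _ _ => Step.subst) _ _ h

/-- One step of weak head reduction: contraction of the redex in head position, not under `λ`. -/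
inductive WhStep : Lam → Lam → Prop
  | beta (a b : Lam) : WhStep (app (abs a) b) (subst a 0 b)
  | appL {a a' : Lam} (b : Lam) : WhStep a a' → WhStep (app a b) (app a' b)

/-- Weak head reduction: the reflexive and transitive closure of `WhStep`. -/
def WhSteps : Lam → Lam → Prop := Relation.ReflTransGen WhStep

theorem WhStep.step (h : WhStep a b) : Step a b := by
  induction h with
  | beta a b => exact .beta a b
  | appL b _ ih => exact .appL b ih

theorem WhStep.unique (h : WhStep t s) (h' : WhStep t s') : s = s' := by
  induction h generalizing s' with
  | beta a b =>
    cases h' with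
    | beta => rfl
    | appL _ h => cases h
  | appL b h ih =>
    cases h' with
    | beta => cases h
    | appL _ h => rw [ih h]

theorem WhStep.subst (h : WhStep t t') (k : ℕ) (u : Lam) :
    WhStep (t.subst k u) (t'.subst k u) := by
  induction h with
  | beta a b =>
    rw [subst_subst k.zero_le]
    exact .beta _ _
  | appL b _ ih => exact .appL _ ih

theorem WhStep.lift (h : WhStep t t') (d : ℕ) : WhStep (t.lift d) (t'.lift d) := by
  induction h with
  | beta a b =>
    rw [lift_subst_of_ge d.zero_le]
    exact .beta _ _
  | appL b _ ih => exact .appL _ ih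

theorem WhSteps.appL (b : Lam) (h : WhSteps a a') : WhSteps (app a b) (app a' b) :=
  Relation.ReflTransGen.lift (app · b) (fun _ _ => WhStep.appL b) _ _ h

theorem WhSteps.subst (h : WhSteps t t') (k : ℕ) (u : Lam) :
    WhSteps (t.subst k u) (t'.subst k u) :=
  Relation.ReflTransGen.lift (Lam.subst · k u) (fun _ _ h => h.subst k u) _ _ h

theorem WhSteps.lift (h : WhSteps t t') (d : ℕ) : WhSteps (t.lift d) (t'.lift d) :=
  Relation.ReflTransGen.lift (Lam.lift d) (fun _ _ h => h.lift d) _ _ h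

theorem HeadVarApp.not_whStep (h : HeadVarApp t) : ¬ WhStep t s := by
  induction h generalizing s with
  | var => nofun
  | app b h ih =>
    rintro (_ | ⟨_, hs⟩)
    · cases h
    · exact ih hs

theorem headVarApp_or_abs_or_whStep (t : Lam) :
    HeadVarApp t ∨ (∃ a, t = abs a) ∨ ∃ s, WhStep t s := by
  induction t with
  | var n => exact .inl (.var n)
  | abs a _ => exact .inr (.inl ⟨a, rfl⟩)
  | app a b iha _ =>
    rcases iha with h | ⟨a', rfl⟩ | ⟨s, h⟩
    · exact .inl (h.app b)
    · exact .inr (.inr ⟨_, .beta _ _⟩)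
    · exact .inr (.inr ⟨_, h.appL b⟩)

/-- Standard reduction: a term is first weak head reduced, then its immediate subterms are reduced
in the same way. It exhausts `▷*` (`Steps.standard`) and exposes the weak head part of a
reduction. -/
inductive Standard : Lam → Lam → Prop
  | var {t : Lam} {n : ℕ} : WhSteps t (var n) → Standard t (var n)
  | app {t a b a' b' : Lam} : WhSteps t (app a b) → Standard a a' → Standard b b' →
      Standard t (app a' b')
  | abs {t a a' : Lam} : WhSteps t (abs a) → Standard a a' → Standard t (abs a')

theorem Standard.refl (t : Lam) : Standard t t := by
  induction t with
  | var n => exact .var .refl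
  | app a b iha ihb => exact .app .refl iha ihb
  | abs a ih => exact .abs .refl ih

theorem Standard.of_whSteps (h : WhSteps t s) (hs : Standard s u) : Standard t u := by
  cases hs with
  | var h' => exact .var (h.trans h')
  | app h' ha hb => exact .app (h.trans h') ha hb
  | abs h' ha => exact .abs (h.trans h') ha

theorem Standard.lift (h : Standard t s) (d : ℕ) : Standard (t.lift d) (s.lift d) := by
  induction h generalizing d with
  | var h => exact .of_whSteps (h.lift d) (.refl _)
  | app h _ _ iha ihb => exact .app (h.lift d) (iha d) (ihb d)
  | abs h _ ih => exact .abs (h.lift d) (ih (d + 1))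

theorem Standard.subst (h : Standard t s) (k : ℕ) (hu : Standard u v) :
    Standard (t.subst k u) (s.subst k v) := by
  induction h generalizing k u v with
  | var h =>
    refine .of_whSteps (h.subst k u) ?_
    simp only [Lam.subst]
    split_ifs
    · exact hu
    · exact .refl _
    · exact .refl _
  | app h _ _ iha ihb => exact .app (h.subst k u) (iha k hu) (ihb k hu)
  | abs h _ ih => exact .abs (h.subst k u) (ih _ (hu.lift 0))

theorem Standard.tail (h : Standard t s) (hs : Step s s') : Standard t s' := by
  induction hs generalizing t with
  | beta a b =>
    obtain - | ⟨hred, hfun, hb⟩ := h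
    obtain - | - | ⟨hlam, ha⟩ := hfun
    exact .of_whSteps ((hred.trans (hlam.appL _)).tail (.beta _ _)) (ha.subst 0 hb)
  | appL b _ ih =>
    obtain - | ⟨hred, ha, hb⟩ := h
    exact .app hred (ih ha) hb
  | appR a _ ih =>
    obtain - | ⟨hred, ha, hb⟩ := h
    exact .app hred ha (ih hb)
  | abs _ ih =>
    obtain - | - | ⟨hred, ha⟩ := h
    exact .abs hred (ih ha)

theorem Steps.standard (h : Steps t s) : Standard t s := by
  induction h with
  | refl => exact .refl _
  | tail _ h ih => exact ih.tail h

/-! ### Solvability -/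

/-- Termination of head reduction, which performs weak head steps and descends under `λ` once
there are none left. It is equivalent to solvability (`solvable_iff_headNormalizing`) and provides
its induction principle. -/
inductive HeadNormalizing : Lam → Prop
  | head {t : Lam} : HeadVarApp t → HeadNormalizing t
  | abs {a : Lam} : HeadNormalizing a → HeadNormalizing (abs a)
  | whStep {t s : Lam} : WhStep t s → HeadNormalizing s → HeadNormalizing t

theorem HeadNormalizing.of_whSteps (h : WhSteps t s) (hs : HeadNormalizing s) :
    HeadNormalizing t := by
  induction h using Relation.ReflTransGen.head_induction_on with
  | refl => exact hs
  | head h _ ih => exact .whStep h ih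

theorem HeadNormalizing.tail (h : HeadNormalizing t) (hs : WhStep t s) : HeadNormalizing s := by
  cases h with
  | head h => exact absurd hs h.not_whStep
  | abs => cases hs
  | whStep h' hs' => exact h'.unique hs ▸ hs'

theorem Standard.exists_whSteps_headVarApp (h : Standard t s) (hs : HeadVarApp s) :
    ∃ t', WhSteps t t' ∧ HeadVarApp t' := by
  induction h with
  | var h => exact ⟨_, h, hs⟩
  | app h _ _ iha _ =>
    obtain - | ⟨_, hs⟩ := hs
    obtain ⟨t', hred, ht'⟩ := iha hs
    exact ⟨_, h.trans (hred.appL _), ht'.app _⟩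
  | abs => cases hs

theorem Standard.headNormalizing (h : Standard t s) (hs : IsHNF s) : HeadNormalizing t := by
  induction hs generalizing t with
  | head hs =>
    obtain ⟨t', hred, ht'⟩ := h.exists_whSteps_headVarApp hs
    exact .of_whSteps hred (.head ht')
  | abs _ ih =>
    obtain - | - | ⟨hred, ha⟩ := h
    exact .of_whSteps hred (.abs (ih ha))

theorem HeadVarApp.solvable (h : HeadVarApp t) : Solvable t := ⟨t, .refl, .head h⟩

theorem Solvable.abs (h : Solvable t) : Solvable (Lam.abs t) :=
  let ⟨_, hred, hs⟩ := h
  ⟨_, hred.abs, hs.abs⟩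

theorem Solvable.of_steps (h : Steps t s) (hs : Solvable s) : Solvable t :=
  let ⟨_, hred, hr⟩ := hs
  ⟨_, h.trans hred, hr⟩

theorem solvable_iff_headNormalizing : Solvable t ↔ HeadNormalizing t := by
  refine ⟨fun ⟨_, hred, hs⟩ => hred.standard.headNormalizing hs, fun h => ?_⟩
  induction h with
  | head h => exact h.solvable
  | abs _ ih => exact ih.abs
  | whStep h _ ih => exact .of_steps (.single h.step) ih

/-- Solvability is reflected along any relation that head reduction preserves in lockstep until the
left-hand side is seen to be solvable. -/
theorem Solvable.of_simulation {R : Lam → Lam → Prop}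
    (hR : ∀ t s, R t s → (Solvable s → Solvable t) ∨
      (∃ a b, t = Lam.abs a ∧ s = Lam.abs b ∧ R a b) ∨
      ∃ t' s', WhStep t t' ∧ WhStep s s' ∧ R t' s')
    (hts : R t s) (hs : Solvable s) : Solvable t := by
  have hs' := solvable_iff_headNormalizing.1 hs
  induction hs' generalizing t with
  | @head s h =>
    rcases hR t s hts with hsolv | ⟨_, _, _, rfl, _⟩ | ⟨_, _, _, hstep, _⟩
    · exact hsolv hs
    · cases h
    · exact absurd hstep h.not_whStep
  | @abs b h ih =>
    rcases hR t _ hts with hsolv | ⟨a, _, rfl, ⟨⟩, hab⟩ | ⟨_, _, _, hstep, _⟩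
    · exact hsolv hs
    · exact (ih hab (solvable_iff_headNormalizing.2 h)).abs
    · cases hstep
  | @whStep s s' h hs' ih =>
    rcases hR t s hts with hsolv | ⟨_, _, _, rfl, _⟩ | ⟨t', _, ht, hstep, hts'⟩
    · exact hsolv hs
    · cases h
    · cases h.unique hstep
      exact .of_steps (.single ht.step) (ih hts' (solvable_iff_headNormalizing.2 hs'))

theorem Solvable.of_subst (h : Solvable (t.subst k u)) : Solvable t := by
  refine of_simulation (R := fun t s => ∃ k u, s = t.subst k u) ?_ ⟨k, u, rfl⟩ h
  rintro t _ ⟨k, u, rfl⟩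
  rcases headVarApp_or_abs_or_whStep t with ht | ⟨a, rfl⟩ | ⟨t', ht⟩
  · exact .inl fun _ => ht.solvable
  · exact .inr (.inl ⟨a, _, rfl, rfl, _, _, rfl⟩)
  · exact .inr (.inr ⟨t', _, ht, ht.subst k u, k, u, rfl⟩)

theorem Solvable.of_lift (h : Solvable (t.lift d)) : Solvable t := by
  refine of_simulation (R := fun t s => ∃ d, s = t.lift d) ?_ ⟨d, rfl⟩ h
  rintro t _ ⟨d, rfl⟩
  rcases headVarApp_or_abs_or_whStep t with ht | ⟨a, rfl⟩ | ⟨t', ht⟩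
  · exact .inl fun _ => ht.solvable
  · exact .inr (.inl ⟨a, _, rfl, rfl, _, rfl⟩)
  · exact .inr (.inr ⟨t', _, ht, ht.lift d, d, rfl⟩)

theorem Solvable.of_app (h : Solvable (app a b)) : Solvable a := by
  refine of_simulation (R := fun t s => ∃ b, s = Lam.app t b) ?_ ⟨b, rfl⟩ h
  rintro t _ ⟨b, rfl⟩
  rcases headVarApp_or_abs_or_whStep t with ht | ⟨a, rfl⟩ | ⟨t', ht⟩
  · exact .inl fun _ => ht.solvable
  · refine .inl fun hs => Solvable.abs (of_subst (k := 0) (u := b) ?_)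
    exact solvable_iff_headNormalizing.2 ((solvable_iff_headNormalizing.1 hs).tail (.beta a b))
  · exact .inr (.inr ⟨t', _, ht, ht.appL b, b, rfl⟩)

theorem not_solvable_Omega : ¬ Solvable Omega := by
  rw [solvable_iff_headNormalizing]
  generalize ht : Omega = t
  intro h
  induction h with
  | head h =>
    subst ht
    exact h.not_whStep (.beta _ _)
  | abs => cases ht
  | whStep h _ ih =>
    subst ht
    exact ih (WhStep.beta _ _ |>.unique h)

theorem HeadVarApp.headVarApp_subst_or_solvable (h : HeadVarApp t) (k : ℕ) :
    (∀ u, HeadVarApp (t.subst k u)) ∨ ∀ u, Solvable (t.subst k u) → Solvable u := by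
  induction h with
  | var n =>
    by_cases hn : n = k
    · exact .inr fun u hu => by simpa only [Lam.subst, if_pos hn] using hu
    · refine .inl fun u => ?_
      simp only [Lam.subst, if_neg hn]
      split_ifs <;> exact .var _
  | app b _ ih => exact ih.imp (fun h u => (h u).app _) fun h u hu => h u hu.of_app

/-- A weak form of the genericity lemma: head reduction of `t[k:=U]` either never brings `U` into
head position, or inherits its unsolvability. -/
theorem Solvable.subst_of_not_solvable (hU : ¬ Solvable U) (h : Solvable (t.subst k U)) :
    Solvable (t.subst k A) := by
  refine of_simulation (R := fun t s => ∃ r k A U,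
    ¬ Solvable U ∧ t = Lam.subst r k A ∧ s = Lam.subst r k U) ?_ ⟨t, k, A, U, hU, rfl, rfl⟩ h
  rintro _ _ ⟨r, k, A, U, hU, rfl, rfl⟩
  rcases headVarApp_or_abs_or_whStep r with hr | ⟨a, rfl⟩ | ⟨r', hr⟩
  · refine .inl fun hs => ?_
    rcases hr.headVarApp_subst_or_solvable k with hvar | hsolv
    · exact (hvar A).solvable
    · exact absurd (hsolv U hs) hU
  · exact .inr (.inl ⟨_, _, rfl, rfl, a, k + 1, _, _, mt of_lift hU, rfl, rfl⟩)
  · exact .inr (.inr ⟨_, _, hr.subst k A, hr.subst k U, r', k, A, U, hU, rfl, rfl⟩)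

/-! ### Occurrences -/

theorem occOf_var : OccOf x (var n) p ↔ p = [] ∧ n = x := by
  rcases p with _ | ⟨_ | _ | _, _⟩ <;> simp [OccOf, subtermAt]

theorem occOf_app : OccOf x (app a b) p ↔
    (∃ q, p = .left :: q ∧ OccOf x a q) ∨ ∃ q, p = .right :: q ∧ OccOf x b q := by
  rcases p with _ | ⟨_ | _ | _, _⟩ <;> simp [OccOf, subtermAt]

theorem occOf_abs : OccOf x (abs a) p ↔ ∃ q, p = .down :: q ∧ OccOf (x + 1) a q := by
  rcases p with _ | ⟨_ | _ | _, _⟩ <;>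
    simp [OccOf, subtermAt, add_comm, add_left_comm]

theorem finite_occOf (x : ℕ) (t : Lam) : {p | OccOf x t p}.Finite := by
  induction t generalizing x with
  | var n => exact (Set.finite_singleton []).subset fun p hp => (occOf_var.1 hp).1
  | app a b iha ihb =>
    refine (((iha x).image (.left :: ·)).union ((ihb x).image (.right :: ·))).subset ?_
    rintro p hp
    rcases occOf_app.1 hp with ⟨q, rfl, hq⟩ | ⟨q, rfl, hq⟩
    · exact .inl ⟨q, hq, rfl⟩
    · exact .inr ⟨q, hq, rfl⟩
  | abs a ih =>
    refine ((ih (x + 1)).image (.down :: ·)).subset fun p hp => ?_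
    obtain ⟨q, rfl, hq⟩ := occOf_abs.1 hp
    exact ⟨q, hq, rfl⟩

theorem add_count_down_cons (x : ℕ) (q : Pos) :
    x + (Dir.down :: q).count .down = x + 1 + q.count .down := by
  rw [List.count_cons_self]
  omega

theorem OccOf.exists_subtermAt (h : OccOf x t (q ++ r)) :
    ∃ u, subtermAt t q = some u ∧ OccOf (x + q.count .down) u r := by
  induction q generalizing t x with
  | nil => exact ⟨t, by simp only [subtermAt], h⟩
  | cons d q ih =>
    cases t with
    | var n => simp [occOf_var] at h
    | app a b => cases d <;> simp [occOf_app] at h <;> simpa [subtermAt] using ih h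
    | abs a =>
      cases d <;> simp [occOf_abs] at h
      rw [add_count_down_cons]
      simpa only [subtermAt] using ih h

theorem headed_of_occOf_replicate_left (h : OccOf x t (List.replicate n .left)) :
    Headed x t := by
  induction t generalizing n with
  | var m => exact (occOf_var.1 h).2 ▸ .var _
  | app a b iha _ =>
    rcases n with _ | n
    · simp [occOf_app] at h
    · have ha : OccOf x a (List.replicate n .left) := by
        simpa [occOf_app, List.replicate_succ] using h
      exact (iha ha).app b
  | abs a _ => cases n <;> simp [occOf_abs, List.replicate_succ] at h

theorem occOf_lift (hd : d ≤ x) : OccOf (x + 1) (lift d t) p ↔ OccOf x t p := by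
  induction t generalizing d x p with
  | var n =>
    simp only [lift]
    split_ifs <;> simp only [occOf_var] <;> exact and_congr_right fun _ => by omega
  | app a b iha ihb => simp only [lift, occOf_app, iha hd, ihb hd]
  | abs a ih => simp only [lift, occOf_abs, ih (Nat.succ_le_succ hd)]

theorem OccOf.subst_body (hk : k ≤ x) (h : OccOf (x + 1) t p) : OccOf x (subst t k u) p := by
  induction t generalizing k x p u with
  | var n =>
    obtain ⟨rfl, rfl⟩ := occOf_var.1 h
    simp only [subst, if_neg (show ¬ x + 1 = k by omega), if_pos (show k < x + 1 by omega),
      Nat.add_sub_cancel, occOf_var, and_self]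
  | app a b iha ihb =>
    exact occOf_app.2 <| (occOf_app.1 h).imp
      (fun ⟨q, hp, hq⟩ => ⟨q, hp, iha hk hq⟩) fun ⟨q, hp, hq⟩ => ⟨q, hp, ihb hk hq⟩
  | abs a ih =>
    obtain ⟨q, rfl, hq⟩ := occOf_abs.1 h
    exact occOf_abs.2 ⟨q, rfl, ih (Nat.succ_le_succ hk) hq⟩

theorem OccOf.subst_arg (hk : k ≤ x) (hq : OccOf k t q) (hr : OccOf x u r) :
    OccOf x (subst t k u) (q ++ r) := by
  induction t generalizing k x q u with
  | var n =>
    obtain ⟨rfl, rfl⟩ := occOf_var.1 hq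
    simpa only [subst, if_true, List.nil_append] using hr
  | app a b iha ihb =>
    exact occOf_app.2 <| (occOf_app.1 hq).imp
      (fun ⟨q, hp, hq⟩ => ⟨q ++ r, hp ▸ rfl, iha hk hq hr⟩)
      fun ⟨q, hp, hq⟩ => ⟨q ++ r, hp ▸ rfl, ihb hk hq hr⟩
  | abs a ih =>
    obtain ⟨q', rfl, hq'⟩ := occOf_abs.1 hq
    exact occOf_abs.2 ⟨q' ++ r, rfl, ih (Nat.succ_le_succ hk) hq' ((occOf_lift x.zero_le).2 hr)⟩

/-! ### Marking occurrences -/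

theorem rename_lift (hx : k ≤ x) (hy : k ≤ y) :
    rename (y + 1) (x + 1) (lift k t) = lift k (rename y x t) := by
  induction t generalizing k x y with
  | var n =>
    simp only [lift, rename]
    split_ifs <;> simp only [lift, rename] <;> split_ifs <;> first | rfl | omega
  | app a b iha ihb => simp only [lift, rename, iha hx hy, ihb hx hy]
  | abs a ih => simp only [lift, rename, ih (Nat.succ_le_succ hx) (Nat.succ_le_succ hy)]

theorem rename_subst (hx : k ≤ x) (hy : k ≤ y) :
    rename y x (subst t k u) = subst (rename (y + 1) (x + 1) t) k (rename y x u) := by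
  induction t generalizing k x y u with
  | var n =>
    simp only [subst, rename]
    split_ifs <;> simp only [subst, rename] <;> split_ifs <;>
      first | rfl | omega
  | app a b iha ihb => simp only [subst, rename, iha hx hy, ihb hx hy]
  | abs a ih =>
    simp only [subst, rename, ih (Nat.succ_le_succ hx) (Nat.succ_le_succ hy),
      rename_lift x.zero_le y.zero_le]

theorem rename_eq_self_of_not_free (h : ¬ Free y t) : rename y x t = t := by
  induction t generalizing x y with
  | var n => exact if_neg (Ne.symm h)
  | app a b iha ihb => rw [rename, iha fun hf => h (.inl hf), ihb fun hf => h (.inr hf)]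
  | abs a ih => rw [rename, ih h]

theorem rename_eq_app_iff :
    rename y x w = app a b ↔ ∃ a' b', w = app a' b' ∧ rename y x a' = a ∧ rename y x b' = b := by
  cases w with
  | var n => simp only [rename]; split_ifs <;> simp
  | app a' b' => simp [rename]
  | abs a' => simp [rename]

theorem rename_eq_abs_iff :
    rename y x w = abs a ↔ ∃ a', w = abs a' ∧ rename (y + 1) (x + 1) a' = a := by
  cases w with
  | var n => simp only [rename]; split_ifs <;> simp
  | app a' b' => simp [rename]
  | abs a' => simp [rename]

theorem OccOf.of_rename (hz : z ≠ x) (h : OccOf z (rename y x t) p) : OccOf z t p := by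
  induction t generalizing x y z p with
  | var n =>
    simp only [rename] at h
    split_ifs at h
    · exact absurd (occOf_var.1 h).2.symm hz
    · exact h
  | app a b iha ihb =>
    exact occOf_app.2 <| (occOf_app.1 h).imp
      (fun ⟨q, hp, hq⟩ => ⟨q, hp, iha hz hq⟩) fun ⟨q, hp, hq⟩ => ⟨q, hp, ihb hz hq⟩
  | abs a ih =>
    obtain ⟨q, rfl, hq⟩ := occOf_abs.1 h
    exact occOf_abs.2 ⟨q, rfl, ih (mt Nat.succ_injective.eq_iff.1 hz) hq⟩

theorem Step.exists_of_rename_eq (h : Step u v) (hw : rename y x w = u) :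
    ∃ w', Step w w' ∧ rename y x w' = v := by
  induction h generalizing x y w with
  | beta a b =>
    obtain ⟨_, b, rfl, hfun, rfl⟩ := rename_eq_app_iff.1 hw
    obtain ⟨a, rfl, rfl⟩ := rename_eq_abs_iff.1 hfun
    exact ⟨_, .beta a b, rename_subst x.zero_le y.zero_le⟩
  | appL b _ ih =>
    obtain ⟨a, b, rfl, ha, rfl⟩ := rename_eq_app_iff.1 hw
    obtain ⟨a', hstep, rfl⟩ := ih ha
    exact ⟨_, hstep.appL b, rfl⟩
  | appR a _ ih =>
    obtain ⟨a, b, rfl, rfl, hb⟩ := rename_eq_app_iff.1 hw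
    obtain ⟨b', hstep, rfl⟩ := ih hb
    exact ⟨_, hstep.appR a, rfl⟩
  | abs _ ih =>
    obtain ⟨a, rfl, ha⟩ := rename_eq_abs_iff.1 hw
    obtain ⟨a', hstep, rfl⟩ := ih ha
    exact ⟨_, hstep.abs, rfl⟩

theorem Steps.exists_of_rename_eq (h : Steps u v) (hw : rename y x w = u) :
    ∃ w', Steps w w' ∧ rename y x w' = v := by
  induction h with
  | refl => exact ⟨w, .refl, hw⟩
  | tail _ h ih =>
    obtain ⟨w', hred, hw'⟩ := ih
    obtain ⟨w'', hstep, hw''⟩ := h.exists_of_rename_eq hw'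
    exact ⟨w'', hred.tail hstep, hw''⟩

theorem finite_free (t : Lam) : {y | Free y t}.Finite := by
  induction t with
  | var n => exact Set.finite_singleton n
  | app a b iha ihb => exact iha.union ihb
  | abs a ih => exact ih.preimage Nat.succ_injective.injOn

theorem OccOf.exists_mark (h : OccOf x t p) (hy : ¬ Free y t) :
    ∃ w, replaceAt t p (var (y + p.count .down)) = some w ∧ rename y x w = t ∧ OccOf y w p := by
  induction t generalizing x y p with
  | var n =>
    obtain ⟨rfl, rfl⟩ := occOf_var.1 h
    exact ⟨var y, by simp [replaceAt], by simp [rename], occOf_var.2 ⟨rfl, rfl⟩⟩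
  | app a b iha ihb =>
    have hya : ¬ Free y a := fun hf => hy (.inl hf)
    have hyb : ¬ Free y b := fun hf => hy (.inr hf)
    rcases occOf_app.1 h with ⟨q, rfl, hq⟩ | ⟨q, rfl, hq⟩
    · obtain ⟨w, hrep, rfl, hw⟩ := iha hq hya
      exact ⟨app w b, by simp [replaceAt, hrep], by rw [rename, rename_eq_self_of_not_free hyb],
        occOf_app.2 (.inl ⟨q, rfl, hw⟩)⟩
    · obtain ⟨w, hrep, rfl, hw⟩ := ihb hq hyb
      exact ⟨app a w, by simp [replaceAt, hrep], by rw [rename, rename_eq_self_of_not_free hya],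
        occOf_app.2 (.inr ⟨q, rfl, hw⟩)⟩
  | abs a ih =>
    obtain ⟨q, rfl, hq⟩ := occOf_abs.1 h
    obtain ⟨w, hrep, rfl, hw⟩ := ih (y := y + 1) hq hy
    exact ⟨abs w, by rw [add_count_down_cons]; simp [replaceAt, hrep], rfl,
      occOf_abs.2 ⟨q, rfl, hw⟩⟩

/-- `TracesTo x u v p p'`: some reduction from `u` to `v` takes the occurrence `p` of `x` to its
residue `p'`, whichever occurrences of `x` are marked along with `p`. Occurrences are marked by
renaming `x` to `y`; in contrast to `Residue`, nothing is required of `y` and `p` need not be the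
only marked occurrence, which makes the notion transitive and compatible with contexts. -/
def TracesTo (x : ℕ) (u v : Lam) (p p' : Pos) : Prop :=
  ∀ y w, rename y x w = u → OccOf y w p →
    ∃ w', Steps w w' ∧ rename y x w' = v ∧ OccOf y w' p'

theorem TracesTo.refl : TracesTo x u u p p := fun _ w hw hp => ⟨w, .refl, hw, hp⟩

theorem TracesTo.trans (h : TracesTo x s t p q) (h' : TracesTo x t u q r) :
    TracesTo x s u p r := by
  intro y w hw hp
  obtain ⟨w', hred, hw', hq⟩ := h y w hw hp
  obtain ⟨w'', hred', hw'', hr⟩ := h' y w' hw' hq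
  exact ⟨w'', hred.trans hred', hw'', hr⟩

theorem TracesTo.left (ha : TracesTo x a a' p p') (hb : Steps b b') :
    TracesTo x (app a b) (app a' b') (.left :: p) (.left :: p') := by
  intro y w hw hp
  obtain ⟨c, d, rfl, hc, hd⟩ := rename_eq_app_iff.1 hw
  obtain ⟨c', hcred, rfl, hp'⟩ := ha y c hc (by simpa [occOf_app] using hp)
  obtain ⟨d', hdred, rfl⟩ := hb.exists_of_rename_eq hd
  exact ⟨app c' d', hcred.app hdred, rfl, by simpa [occOf_app] using hp'⟩

theorem TracesTo.right (ha : Steps a a') (hb : TracesTo x b b' p p') :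
    TracesTo x (app a b) (app a' b') (.right :: p) (.right :: p') := by
  intro y w hw hp
  obtain ⟨c, d, rfl, hc, hd⟩ := rename_eq_app_iff.1 hw
  obtain ⟨c', hcred, rfl⟩ := ha.exists_of_rename_eq hc
  obtain ⟨d', hdred, rfl, hp'⟩ := hb y d hd (by simpa [occOf_app] using hp)
  exact ⟨app c' d', hcred.app hdred, rfl, by simpa [occOf_app] using hp'⟩

theorem TracesTo.down (h : TracesTo (x + 1) a a' p p') :
    TracesTo x (abs a) (abs a') (.down :: p) (.down :: p') := by
  intro y w hw hp
  obtain ⟨c, rfl, hc⟩ := rename_eq_abs_iff.1 hw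
  obtain ⟨c', hred, rfl, hp'⟩ := h (y + 1) c hc (by simpa [occOf_abs] using hp)
  exact ⟨abs c', hred.abs, rfl, by simpa [occOf_abs] using hp'⟩

theorem TracesTo.beta_body :
    TracesTo x (app (abs a) b) (subst a 0 b) (.left :: .down :: p) p := by
  intro y w hw hp
  obtain ⟨_, d, rfl, hfun, rfl⟩ := rename_eq_app_iff.1 hw
  obtain ⟨c, rfl, rfl⟩ := rename_eq_abs_iff.1 hfun
  have hp' : OccOf (y + 1) c p := by simpa [occOf_app, occOf_abs] using hp
  exact ⟨subst c 0 d, .single (.beta c d), rename_subst x.zero_le y.zero_le,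
    hp'.subst_body y.zero_le⟩

theorem TracesTo.beta_arg (hq : OccOf 0 a q) :
    TracesTo x (app (abs a) b) (subst a 0 b) (.right :: r) (q ++ r) := by
  intro y w hw hr
  obtain ⟨_, d, rfl, hfun, rfl⟩ := rename_eq_app_iff.1 hw
  obtain ⟨c, rfl, rfl⟩ := rename_eq_abs_iff.1 hfun
  have hr' : OccOf y d r := by simpa [occOf_app] using hr
  exact ⟨subst c 0 d, .single (.beta c d), rename_subst x.zero_le y.zero_le,
    (hq.of_rename x.succ_ne_zero.symm).subst_arg y.zero_le hr'⟩

theorem TracesTo.residue (h : TracesTo x u v p p') (hp : OccOf x u p) : Residue x u v p p' := by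
  obtain ⟨y, hy⟩ := (finite_free u).exists_notMem
  obtain ⟨w, hmark, hw, hwp⟩ := hp.exists_mark hy
  obtain ⟨w', hred, hw', hp'⟩ := h y w hw hwp
  exact ⟨y, w, w', hy, hmark, hred, hw', hp'⟩

/-! ### Good occurrences -/

/-- `Good A x t p`: the occurrence `p` of `x` in `t` is good with respect to the closed term `A`.
This is the structural form of `GoodOcc`, with `x` arbitrary so that it can pass under binders:
purity amounts to never entering the argument of an application whose function part is headed by
`x`. -/
inductive Good (A : Lam) : ℕ → Lam → Pos → Prop
  | var (x : ℕ) : Solvable A → Good A x (var x) []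
  | left {x : ℕ} {a b : Lam} {p : Pos} :
      Solvable (subst (app a b) x A) → Good A x a p → Good A x (app a b) (.left :: p)
  | right {x : ℕ} {a b : Lam} {p : Pos} :
      Solvable (subst (app a b) x A) → ¬ Headed x a → Good A x b p →
      Good A x (app a b) (.right :: p)
  | down {x : ℕ} {a : Lam} {p : Pos} :
      Solvable (subst (abs a) x A) → Good A (x + 1) a p → Good A x (abs a) (.down :: p)

theorem Good.occOf (h : Good A x t p) : OccOf x t p := by
  induction h with
  | var => exact occOf_var.2 ⟨rfl, rfl⟩
  | left _ _ ih => exact occOf_app.2 (.inl ⟨_, rfl, ih⟩)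
  | right _ _ _ ih => exact occOf_app.2 (.inr ⟨_, rfl, ih⟩)
  | down _ _ ih => exact occOf_abs.2 ⟨_, rfl, ih⟩

theorem Good.solvable (h : Good A x t p) : Solvable (subst t x A) := by
  cases h with
  | var _ hs => simpa only [subst, if_true] using hs
  | left hs => exact hs
  | right hs => exact hs
  | down hs => exact hs

theorem Good.subtermAt (h : Good A x t (q ++ r)) (hu : subtermAt t q = some u) :
    Good A (x + q.count .down) u r := by
  induction q generalizing t x with
  | nil =>
    cases Option.some.inj (by simpa only [Lam.subtermAt] using hu)
    exact h
  | cons d q ih =>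
    rw [List.cons_append] at h
    cases h with
    | left _ h => simpa using ih h hu
    | right _ _ h => simpa using ih h hu
    | down _ h => simpa only [add_count_down_cons] using ih h hu

/-- Both positions pass through `u := subtermAt t (r ++ lʲ)`, where the good one turns right; so `u`
is an application whose function part is not headed by `x`. -/
theorem Good.not_inArgOfOcc (h : Good A x t p) : ¬ InArgOfOcc x t p q := by
  rintro ⟨hq, r, n, rfl, -, j, s, hj, rfl⟩
  obtain ⟨m, rfl⟩ := Nat.exists_eq_add_of_lt hj
  rw [add_assoc, List.replicate_add, ← List.append_assoc] at hq
  obtain ⟨u, hu, hocc⟩ := hq.exists_subtermAt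
  obtain - | - | ⟨-, hhead, -⟩ := h.subtermAt hu
  refine hhead (headed_of_occOf_replicate_left (n := m) ?_)
  simpa [List.replicate_succ, occOf_app] using hocc

theorem Good.goodOcc (h : Good A 0 t p) : GoodOcc A t p := by
  refine ⟨⟨h.occOf, fun q _ => h.not_inArgOfOcc⟩, ?_⟩
  rintro q u ⟨r, rfl⟩ hu
  simpa only [zero_add] using (h.subtermAt hu).solvable

theorem finite_good (A : Lam) (x : ℕ) (t : Lam) : {p | Good A x t p}.Finite :=
  (finite_occOf x t).subset fun _ => Good.occOf

theorem Headed.exists_good (h : Headed x t) (hs : Solvable (subst t x A)) :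
    ∃ p, Good A x t p := by
  induction h with
  | var => exact ⟨[], .var _ (by simpa only [subst, if_true] using hs)⟩
  | app b _ ih =>
    obtain ⟨p, hp⟩ := ih hs.of_app
    exact ⟨.left :: p, .left hs hp⟩

/-! ### Existence of good occurrences -/

theorem OmegaSteps.app (ha : OmegaSteps a a') (hb : OmegaSteps b b') :
    OmegaSteps (Lam.app a b) (Lam.app a' b') :=
  .trans (Relation.ReflTransGen.lift (Lam.app · b) (fun _ _ => OmegaStep.appL b) _ _ ha)
    (Relation.ReflTransGen.lift (Lam.app a') (fun _ _ => OmegaStep.appR a') _ _ hb)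

theorem OmegaSteps.abs (h : OmegaSteps a a') : OmegaSteps (Lam.abs a) (Lam.abs a') :=
  Relation.ReflTransGen.lift Lam.abs (fun _ _ => OmegaStep.abs) _ _ h

theorem join_omegaSteps_of_not_solvable (hs : ¬ Solvable s) (ht : ¬ Solvable t) :
    Relation.Join OmegaSteps s t :=
  ⟨Omega, .single (.unsolv hs), .single (.unsolv ht)⟩

theorem join_omegaSteps_subst_of_solvable_imp
    (h : Solvable (subst t x A) → Relation.Join OmegaSteps (subst t x A) (subst t x Omega)) :
    Relation.Join OmegaSteps (subst t x A) (subst t x Omega) := by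
  by_cases hs : Solvable (subst t x A)
  · exact h hs
  · exact join_omegaSteps_of_not_solvable hs fun hs' =>
      hs (hs'.subst_of_not_solvable not_solvable_Omega)

theorem join_omegaSteps_subst_of_forall_not_good (hA : Closed A) (h : ∀ p, ¬ Good A x t p) :
    Relation.Join OmegaSteps (subst t x A) (subst t x Omega) := by
  induction t generalizing x with
  | var n =>
    refine join_omegaSteps_subst_of_solvable_imp fun hs => ?_
    have hn : n ≠ x := by
      rintro rfl
      exact h [] (.var n (by simpa only [subst, if_true] using hs))
    simp only [subst, if_neg hn]
    exact ⟨_, .refl, .refl⟩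
  | app a b iha ihb =>
    refine join_omegaSteps_subst_of_solvable_imp fun hs => ?_
    have hhead : ¬ Headed x a := fun hx =>
      let ⟨p, hp⟩ := (hx.app b).exists_good hs
      h p hp
    obtain ⟨a', ha, ha'⟩ := iha fun p hp => h _ (.left hs hp)
    obtain ⟨b', hb, hb'⟩ := ihb fun p hp => h _ (.right hs hhead hp)
    exact ⟨app a' b', ha.app hb, ha'.app hb'⟩
  | abs a ih =>
    refine join_omegaSteps_subst_of_solvable_imp fun hs => ?_
    obtain ⟨a', ha, ha'⟩ := ih fun p hp => h _ (.down hs hp)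
    rw [hA.subst_abs, closed_Omega.subst_abs]
    exact ⟨abs a', ha.abs, ha'.abs⟩

theorem SimH.of_steps (hu : Steps u u') (hv : Steps v v') (h : SimH u' v') : SimH u v :=
  let ⟨w, huw, hvw⟩ := h
  ⟨w, .trans (Relation.ReflTransGen.mono (fun _ _ => .inl) _ _ hu) huw,
    .trans (Relation.ReflTransGen.mono (fun _ _ => .inl) _ _ hv) hvw⟩

theorem simH_of_join_omegaSteps (h : Relation.Join OmegaSteps u v) : SimH u v :=
  let ⟨w, hu, hv⟩ := h
  ⟨w, Relation.ReflTransGen.mono (fun _ _ => .inr) _ _ hu,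
    Relation.ReflTransGen.mono (fun _ _ => .inr) _ _ hv⟩

theorem exists_good_of_not_simH (hA : Closed A)
    (hne : ¬ SimH (subst s x A) (subst s x Omega)) (h : Steps s t) : ∃ p, Good A x t p := by
  by_contra! hnone
  exact hne <| .of_steps (h.subst x A) (h.subst x Omega) <|
    simH_of_join_omegaSteps <| join_omegaSteps_subst_of_forall_not_good hA hnone

/-! ### Good occurrences are residues of good occurrences -/

theorem Headed.step (h : Headed x t) (hs : Step t t') : Headed x t' := by
  induction h generalizing t' with
  | var => cases hs
  | app b h ih =>
    cases hs with
    | beta => cases h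
    | appL _ hs => exact (ih hs).app _
    | appR _ hs => exact h.app _

theorem Headed.lift (h : Headed x t) (hd : d ≤ x) : Headed (x + 1) (t.lift d) := by
  induction h with
  | var => simpa only [Lam.lift, if_neg hd.not_gt] using .var _
  | app b _ ih => exact ih.app _

theorem Headed.subst (h : Headed (x + 1) t) (hk : k ≤ x) : Headed x (t.subst k u) := by
  generalize hy : x + 1 = y at h
  induction h with
  | var =>
    subst hy
    simp only [Lam.subst, if_neg (show ¬ x + 1 = k by omega), if_pos (show k < x + 1 by omega)]
    exact .var _
  | app b _ ih => exact ih.app _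

theorem Solvable.of_subst_lift (hA : Closed A) (hd : d ≤ x)
    (h : Solvable ((t.lift d).subst (x + 1) A)) : Solvable (t.subst x A) := by
  refine of_lift (d := d) ?_
  rwa [lift_subst_of_le hd, hA.lift_eq]

theorem Solvable.of_subst_subst (hA : Closed A) (hk : k ≤ x)
    (h : Solvable ((t.subst k u).subst x A)) : Solvable (t.subst (x + 1) A) := by
  rw [subst_subst hk, hA.lift_eq] at h
  exact h.of_subst

theorem Good.of_lift (hA : Closed A) (hd : d ≤ x) (h : Good A (x + 1) (lift d t) p) :
    Good A x t p := by
  induction t generalizing d x p with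
  | var n =>
    obtain ⟨rfl, rfl⟩ := occOf_var.1 ((occOf_lift hd).1 h.occOf)
    exact .var n (by simpa only [subst, if_true] using h.solvable.of_subst_lift hA hd)
  | app a b iha ihb =>
    have hs := h.solvable.of_subst_lift hA hd
    cases h with
    | left _ ha => exact .left hs (iha hd ha)
    | right _ hhead hb => exact .right hs (fun hx => hhead (hx.lift hd)) (ihb hd hb)
  | abs a ih =>
    have hs := h.solvable.of_subst_lift hA hd
    cases h with
    | down _ ha => exact .down hs (ih (Nat.succ_le_succ hd) ha)

theorem Good.of_subst (hA : Closed A) (hk : k ≤ x) (h : Good A x (subst t k u) p) :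
    Good A (x + 1) t p ∨ ∃ q r, p = q ++ r ∧ OccOf k t q ∧ Good A x u r := by
  induction t generalizing k x u p with
  | var n =>
    have hs := h.solvable.of_subst_subst hA hk
    by_cases hn : n = k
    · simp only [subst, if_pos hn] at h
      exact .inr ⟨[], p, rfl, occOf_var.2 ⟨rfl, hn⟩, h⟩
    · simp only [subst, if_neg hn] at h
      obtain ⟨rfl, hx⟩ : p = [] ∧ n = x + 1 := by
        split_ifs at h <;> have := occOf_var.1 h.occOf <;> exact ⟨this.1, by omega⟩
      subst hx
      exact .inl (.var _ (by simpa only [subst, if_true] using hs))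
  | app a b iha ihb =>
    have hs := h.solvable.of_subst_subst hA hk
    cases h with
    | left _ ha =>
      rcases iha hk ha with ha | ⟨q, r, rfl, hq, hr⟩
      · exact .inl (.left hs ha)
      · exact .inr ⟨.left :: q, r, rfl, occOf_app.2 (.inl ⟨q, rfl, hq⟩), hr⟩
    | right _ hhead hb =>
      rcases ihb hk hb with hb | ⟨q, r, rfl, hq, hr⟩
      · exact .inl (.right hs (fun hx => hhead (hx.subst hk)) hb)
      · exact .inr ⟨.right :: q, r, rfl, occOf_app.2 (.inr ⟨q, rfl, hq⟩), hr⟩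
  | abs a ih =>
    have hs := h.solvable.of_subst_subst hA hk
    cases h with
    | down _ ha =>
      rcases ih (Nat.succ_le_succ hk) ha with ha | ⟨q, r, rfl, hq, hr⟩
      · exact .inl (.down hs ha)
      · exact .inr ⟨.down :: q, r, rfl, occOf_abs.2 ⟨q, rfl, hq⟩, hr.of_lift hA x.zero_le⟩

theorem Good.solvable_of_step (hp : Good A x v p) (h : Step u v) : Solvable (subst u x A) :=
  .of_steps (.single h.subst) hp.solvable

theorem Good.exists_tracesTo_of_step (hA : Closed A) (h : Step u v) (hp : Good A x v p') :
    ∃ p, Good A x u p ∧ TracesTo x u v p p' := by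
  induction h generalizing x p' with
  | beta a b =>
    have hs := hp.solvable_of_step (.beta a b)
    rcases hp.of_subst hA x.zero_le with ha | ⟨q, r, rfl, hq, hr⟩
    · exact ⟨_, .left hs (.down (hA.subst_abs ▸ ha.solvable.abs) ha), .beta_body⟩
    · exact ⟨_, .right hs nofun hr, .beta_arg hq⟩
  | appL b h ih =>
    have hs := hp.solvable_of_step (h.appL b)
    cases hp with
    | left _ ha =>
      obtain ⟨p, hp, htrace⟩ := ih ha
      exact ⟨_, .left hs hp, htrace.left .refl⟩
    | right _ hhead hb =>
      exact ⟨_, .right hs (fun hx => hhead (hx.step h)) hb, .right (.single h) .refl⟩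
  | appR a h ih =>
    have hs := hp.solvable_of_step (h.appR a)
    cases hp with
    | left _ ha => exact ⟨_, .left hs ha, .left .refl (.single h)⟩
    | right _ hhead hb =>
      obtain ⟨p, hp, htrace⟩ := ih hb
      exact ⟨_, .right hs hhead hp, .right .refl htrace⟩
  | abs h ih =>
    have hs := hp.solvable_of_step h.abs
    cases hp with
    | down _ ha =>
      obtain ⟨p, hp, htrace⟩ := ih ha
      exact ⟨_, .down hs hp, htrace.down⟩

theorem Good.exists_tracesTo (hA : Closed A) (h : Steps u v) (hp : Good A x v p') :
    ∃ p, Good A x u p ∧ TracesTo x u v p p' := by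
  induction h generalizing p' with
  | refl => exact ⟨p', hp, .refl⟩
  | tail _ h ih =>
    obtain ⟨q, hq, htrace⟩ := hp.exists_tracesTo_of_step hA h
    obtain ⟨p, hp, htrace'⟩ := ih hq
    exact ⟨p, hp, htrace'.trans htrace⟩

theorem Good.exists_residue (hA : Closed A) (h : Steps u v) (hp : Good A x v p') :
    ∃ p, Good A x u p ∧ Residue x u v p p' :=
  let ⟨p, hp, htrace⟩ := hp.exists_tracesTo hA h
  ⟨p, hp, htrace.residue hp.occOf⟩

end Lam

open CategoryTheory in
theorem exists_branch_of_finite_nonempty {X : ℕ → Type*} [∀ k, Finite (X k)] [∀ k, Nonempty (X k)]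
    (parent : ∀ k, X (k + 1) → X k) : ∃ f : ∀ k, X k, ∀ k, parent k (f (k + 1)) = f k := by
  let T : ℕᵒᵖ ⥤ Type _ := Functor.ofOpSequence (X := fun k => X k) fun k => ↾(parent k)
  have : ∀ k, Finite (T.obj k) := fun k => inferInstanceAs (Finite (X k.unop))
  have : ∀ k, Nonempty (T.obj k) := fun k => inferInstanceAs (Nonempty (X k.unop))
  obtain ⟨f, hf⟩ := nonempty_sections_of_finite_inverse_system T
  refine ⟨fun k => f (.op k), fun k => ?_⟩
  have hk := hf (homOfLE k.le_succ).op
  rw [Functor.ofOpSequence_map_homOfLE_succ] at hk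
  exact hk

open Lam in
theorem good_infinite_branch_general {A : Lam} {Fs : ℕ → Lam} (hA : Closed A)
    (hne : ¬ SimH (subst (Fs 0) 0 A) (subst (Fs 0) 0 Omega))
    (hstep : ∀ k, Steps (Fs k) (Fs (k + 1))) :
    ∃ p : ℕ → Pos, ∀ k,
      GoodOcc A (Fs k) (p k) ∧ Residue 0 (Fs k) (Fs (k + 1)) (p k) (p (k + 1)) := by
  have hred : ∀ k, Steps (Fs 0) (Fs k) := fun k => by
    induction k with
    | zero => exact .refl
    | succ k ih => exact ih.trans (hstep k)
  have : ∀ k, Nonempty {p // Good A 0 (Fs k) p} := fun k =>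
    nonempty_subtype.2 (exists_good_of_not_simH hA hne (hred k))
  have : ∀ k, Finite {p // Good A 0 (Fs k) p} := fun k => finite_good A 0 (Fs k)
  choose parent hgood hres using fun k (p : {p // Good A 0 (Fs (k + 1)) p}) =>
    p.2.exists_residue hA (hstep k)
  obtain ⟨p, hp⟩ := exists_branch_of_finite_nonempty (X := fun k => {p // Good A 0 (Fs k) p})
    fun k p => ⟨parent k p, hgood k p⟩
  have hparent : ∀ k, parent k (p (k + 1)) = p k := fun k => congrArg Subtype.val (hp k)
  refine ⟨fun k => p k, fun k => ⟨(p k).2.goodOcc, ?_⟩⟩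
  simpa only [hparent] using hres k (p (k + 1))

open Lam in
/-- under the standing hypotheses on `F` (non-normalizable, unique free
variable `x` — here the de Bruijn index `0` — with `x ∈ βΩ(F)`) and `A` (closed, with
`F[x:=A] ≄ F[x:=Ω]`), for every cofinal reduction sequence `(F_k)` of `F` the associated
tree of pure occurrences of `x` has an infinite good branch: a choice of an occurrence
`p k` of `x` in `F_k` for each `k`, each being good (hence pure) in `F_k`, and `p (k+1)`
being a residue of `p k`. -/
theorem good_infinite_branch (F A : Lam) (Fs : ℕ → Lam)
    (hFnonnorm : ¬ ∃ N, Steps F N ∧ Normal N)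
    (hFfree : Free 0 F) (hFonly : ∀ y, Free y F → y = 0)
    (hxbo : ∀ t', BOSteps F t' → Free 0 t')
    (hA : Closed A)
    (hne : ¬ SimH (subst F 0 A) (subst F 0 Omega))
    (h0 : Fs 0 = F)
    (hstep : ∀ k, Steps (Fs k) (Fs (k + 1)))
    (hcof : ∀ G, Steps F G → ∃ k, Steps G (Fs k)) :
    ∃ p : ℕ → Pos, ∀ k,
      GoodOcc A (Fs k) (p k) ∧ Residue 0 (Fs k) (Fs (k + 1)) (p k) (p (k + 1)) := by
  subst h0
  exact good_infinite_branch_general hA hne hstep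
end

section
/- In the λJ-calculus, let t be a solvable term. If ν occurs nicely in t, then ν occurs nicely in every reduct of t; if ν occurs correctly in t, then ν occurs correctly in every reduct of t. -/
/-! ## The λJ-calculus: the untyped λ-calculus extended with a constant `J` and a
distinguished (never bound) variable `ν`, in de Bruijn representation. -/

/-- Terms of the λJ-calculus. -/
inductive JTm : Type where
  | var : ℕ → JTm
  | jc : JTm            -- the constant `J`
  | nu : JTm            -- the distinguished variable `ν`
  | app : JTm → JTm → JTm
  | abs : JTm → JTm
  deriving DecidableEq

namespace JTm

/-- Lifting of de Bruijn indices (cutoff `d`). -/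
def lift (d : ℕ) : JTm → JTm
  | var n => if n < d then var n else var (n + 1)
  | jc => jc
  | nu => nu
  | app a b => app (lift d a) (lift d b)
  | abs a => abs (lift (d + 1) a)

/-- Capture-avoiding substitution of `u` for the variable `k`. -/
def subst : JTm → ℕ → JTm → JTm
  | var n, k, u => if n = k then u else if k < n then var (n - 1) else var n
  | jc, _, _ => jc
  | nu, _, _ => nu
  | app a b, k, u => app (subst a k u) (subst b k u)
  | abs a, k, u => abs (subst a (k + 1) (lift 0 u))

/-- `n`-fold lifting. -/
def liftN (n : ℕ) (t : JTm) : JTm := (lift 0)^[n] t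

/-- `n`-fold abstraction `λy₁…λyₙ.t`. -/
def absN : ℕ → JTm → JTm
  | 0, t => t
  | n + 1, t => abs (absN n t)

/-- Application of a head to a list of arguments. -/
def mkApps (h : JTm) (as : List JTm) : JTm := as.foldl app h

/-- The right-hand side `λy₁…λy_p.(u (J ν y₁) … (J ν y_p))` of the `J`-rule. -/
def jRhs (p : ℕ) (u : JTm) : JTm :=
  absN p (mkApps (liftN p u) ((List.range p).reverse.map fun i => app (app jc nu) (var i)))

/-- One-step reduction `▷` of the λJ-calculus: β-reduction together with the rule
`(J ν u) ▷ λy₁…λy_p.(u (J ν y₁) … (J ν y_p))`. -/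
inductive Step (p : ℕ) : JTm → JTm → Prop
  | beta (a b : JTm) : Step p (app (abs a) b) (subst a 0 b)
  | jrule (u : JTm) : Step p (app (app jc nu) u) (jRhs p u)
  | appL {a a' : JTm} (b : JTm) : Step p a a' → Step p (app a b) (app a' b)
  | appR (a : JTm) {b b' : JTm} : Step p b b' → Step p (app a b) (app a b')
  | abs {a a' : JTm} : Step p a a' → Step p (JTm.abs a) (JTm.abs a')

/-- `▷*`. -/
def Steps (p : ℕ) : JTm → JTm → Prop := Relation.ReflTransGen (Step p)

/-- `EJ p u e` : `e ∈ E_u`, the least set of terms containing `u` and closed under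
`e ↦ (J ν e)` and `e ↦ λy⃗.(e e⃗_y)`, where `y⃗` is a sequence of (fresh) variables and
each component of `e⃗_y` lies in `E_y` for the corresponding variable `y` of `y⃗`
(in de Bruijn style, `λy⃗` of length `n` binds the indices `n-1, …, 0` and `e` is
lifted accordingly). -/
inductive EJ (p : ℕ) : JTm → JTm → Prop
  | base (u : JTm) : EJ p u u
  | jnu {u e : JTm} : EJ p u e → EJ p u (app (app jc nu) e)
  | lamApp {u e : JTm} (n : ℕ) (as : List JTm) :
      EJ p u e →
      List.Forall₂ (fun i a => EJ p (var i) a) (List.range n).reverse as →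
      EJ p u (absN n (mkApps (liftN n e) as))

/-- `t ⤳ t'` : `t = C[u]` and `t' = C[u']` for a one-hole context `C` and `u' ∈ E_u`. -/
inductive Leads (p : ℕ) : JTm → JTm → Prop
  | base {u u' : JTm} : EJ p u u' → Leads p u u'
  | appL {a a' : JTm} (b : JTm) : Leads p a a' → Leads p (app a b) (app a' b)
  | appR (a : JTm) {b b' : JTm} : Leads p b b' → Leads p (app a b) (app a b')
  | abs {a a' : JTm} : Leads p a a' → Leads p (JTm.abs a) (JTm.abs a')

/-- `⤳*`. -/
def LeadsStar (p : ℕ) : JTm → JTm → Prop := Relation.ReflTransGen (Leads p)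

/-- A variable applied to a (possibly empty) list of arguments. -/
inductive HeadVarApp : JTm → Prop
  | var (n : ℕ) : HeadVarApp (var n)
  | app {a : JTm} (b : JTm) : HeadVarApp a → HeadVarApp (app a b)

/-- Head normal forms `λx₁…λxₙ.(y t₁ … tₘ)`. -/
inductive IsHNF : JTm → Prop
  | head {t : JTm} : HeadVarApp t → IsHNF t
  | abs {a : JTm} : IsHNF a → IsHNF (JTm.abs a)

/-- Solvability in the λJ-calculus. -/
def Solvable (p : ℕ) (t : JTm) : Prop := ∃ h, Steps p t h ∧ IsHNF h

/-- `ν` occurs nicely in `t` : every occurrence of `ν` is inside a subterm `(J ν)`. -/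
def Nice : JTm → Prop
  | app jc nu => True
  | app a b => Nice a ∧ Nice b
  | abs a => Nice a
  | nu => False
  | _ => True

/-- `ν` occurs in `t`. -/
def HasNu : JTm → Prop
  | nu => True
  | app a b => HasNu a ∨ HasNu b
  | abs a => HasNu a
  | _ => False

/-- `ν` occurs correctly in `t` : `ν` occurs nicely in `t` and `t` has a head normal
form of the shape `λx⃗.(x c⃗ e⃗_y)` where `y⃗` is a final subsequence of `x⃗` of length
`k ≥ 1` (the `k` innermost binders, i.e. the de Bruijn indices `k-1, …, 0`), each
component of `e⃗_y` is in `E_y`, and `ν` occurs in `e⃗_y`. -/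
def Correct (p : ℕ) (t : JTm) : Prop :=
  Nice t ∧ ∃ (n m k : ℕ) (cs es : List JTm),
    1 ≤ k ∧ es.length = k ∧ k ≤ n ∧
    Steps p t (absN n (mkApps (var m) (cs ++ es))) ∧
    List.Forall₂ (fun i e => EJ p (var i) e) (List.range k).reverse es ∧
    ∃ e ∈ es, HasNu e

/-- `t` contains no subterm of the form `(ν u)`. -/
def NoNuApp : JTm → Prop
  | app a b => a ≠ nu ∧ NoNuApp a ∧ NoNuApp b
  | abs a => NoNuApp a
  | _ => True

end JTm

/-!
Reduction copies nice occurrences of `ν`, or replaces them by others when `(J ν u)` is contracted,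
so niceness is stable under reduction.

For correctness, complete superdevelopment `t ↦ superdev t` satisfies the Z property, so a reduct
of `t` and a head normal form of `t` have a common reduct that is an iterated superdevelopment of
the latter. It remains to see that superdevelopment preserves the shape `λx⃗.(x c⃗ e⃗_y)` and the
occurrence of `ν` in `e⃗_y`. In an element of `E_y` the only redexes are `(J ν e)`, whose
contractum contains `ν` as `p ≥ 1`, and those at the head of `(λz⃗.(e c⃗)) a⃗`, where each `c`
lies in some `E_z` and each `a` in some `E_w`. Contracting the latter turns `c ∈ E_z` into
`c[a/z] ∈ E_a ⊆ E_w`, so that one obtains again an element of `E_y`; and `c[a/z]` contains `a`, so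
that `ν` is not erased.
-/

/-- The Z property (van Oostrom) of a relation `r` with respect to a map `f`: whenever `a` reduces
to `b` in one step, `b` reduces to `f a` and `f a` reduces to `f b`. It makes the iterates of `f`
cofinal among the reducts, so that `r` is confluent. -/
def ZProperty {α : Type*} (r : α → α → Prop) (f : α → α) : Prop :=
  ∀ ⦃a b⦄, r a b → Relation.ReflTransGen r b (f a) ∧ Relation.ReflTransGen r (f a) (f b)

namespace ZProperty

variable {α : Type*} {r : α → α → Prop} {f : α → α} {a b c : α}

lemma iterate (hf : ZProperty r f) (n : ℕ) (h : Relation.ReflTransGen r a b) :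
    Relation.ReflTransGen r (f^[n] a) (f^[n] b) := by
  induction n with
  | zero => exact h
  | succ n ih =>
    rw [Function.iterate_succ_apply', Function.iterate_succ_apply']
    exact Relation.ReflTransGen.lift' f (fun _ _ hs ↦ (hf hs).2) _ _ ih

lemma exists_iterate (hf : ZProperty r f) (h : Relation.ReflTransGen r a b) :
    ∃ n, Relation.ReflTransGen r b (f^[n] a) := by
  induction h with
  | refl => exact ⟨0, .refl⟩
  | tail _ hs ih =>
    obtain ⟨n, hn⟩ := ih
    refine ⟨n + 1, (hf hs).1.trans ?_⟩
    rw [Function.iterate_succ_apply']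
    exact hf.iterate 1 hn

lemma exists_iterate_of_reflTransGen (hf : ZProperty r f) (hab : Relation.ReflTransGen r a b)
    (hac : Relation.ReflTransGen r a c) : ∃ n, Relation.ReflTransGen r b (f^[n] c) :=
  (hf.exists_iterate hab).imp fun n hn ↦ hn.trans (hf.iterate n hac)

end ZProperty

lemma forall₂_trans {α : Type*} {R : α → α → Prop} [IsTrans α R] {l₁ l₂ l₃ : List α}
    (h : List.Forall₂ R l₁ l₂) (h' : List.Forall₂ R l₂ l₃) : List.Forall₂ R l₁ l₃ := by
  induction h generalizing l₃ with
  | nil => exact h'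
  | cons hab _ ih =>
    obtain ⟨c, l, hbc, hl, rfl⟩ := List.forall₂_cons_left_iff.1 h'
    exact .cons (_root_.trans hab hbc) (ih hl)

lemma exists_mem_left_of_forall₂ {α β : Type*} {R : α → β → Prop} {l : List α} {l' : List β}
    {b : β} (h : List.Forall₂ R l l') (hb : b ∈ l') : ∃ a ∈ l, R a b := by
  induction h with
  | nil => nomatch hb
  | cons hab _ ih =>
    rcases List.mem_cons.1 hb with rfl | hb
    · exact ⟨_, List.mem_cons_self, hab⟩
    · exact (ih hb).imp fun _ ha ↦ ⟨List.mem_cons_of_mem _ ha.1, ha.2⟩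

namespace JTm

open List

/-! ### Substitution calculus -/

lemma lift_lift (t : JTm) {i j : ℕ} (h : i ≤ j) :
    (t.lift j).lift i = (t.lift i).lift (j + 1) := by
  induction t generalizing i j <;> grind [lift]

lemma subst_lift (t : JTm) (k : ℕ) (u : JTm) : (t.lift k).subst k u = t := by
  induction t generalizing k u <;> grind [lift, subst]

lemma lift_subst_of_le (t u : JTm) {k d : ℕ} (h : k ≤ d) :
    (t.subst k u).lift d = (t.lift (d + 1)).subst k (u.lift d) := by
  induction t generalizing k d u <;> grind [lift, subst, lift_lift]

lemma lift_subst_of_ge (t u : JTm) {k d : ℕ} (h : d ≤ k) :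
    (t.subst k u).lift d = (t.lift d).subst (k + 1) (u.lift d) := by
  induction t generalizing k d u <;> grind [lift, subst, lift_lift]

lemma subst_subst (t u v : JTm) {i k : ℕ} (h : i ≤ k) :
    (t.subst i u).subst k v = (t.subst (k + 1) (v.lift i)).subst i (u.subst k v) := by
  induction t generalizing i k u v <;>
    grind [subst, subst_lift, lift_lift, lift_subst_of_ge]

lemma lift_eq_jc_iff {t : JTm} {d : ℕ} : t.lift d = jc ↔ t = jc := by
  cases t <;> grind [lift]

lemma lift_eq_nu_iff {t : JTm} {d : ℕ} : t.lift d = nu ↔ t = nu := by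
  cases t <;> grind [lift]

lemma liftN_zero (t : JTm) : t.liftN 0 = t := rfl

lemma liftN_succ (n : ℕ) (t : JTm) : t.liftN (n + 1) = (t.liftN n).lift 0 :=
  Function.iterate_succ_apply' ..

lemma liftN_succ' (n : ℕ) (t : JTm) : t.liftN (n + 1) = (t.lift 0).liftN n :=
  Function.iterate_succ_apply ..

lemma liftN_liftN (m n : ℕ) (t : JTm) : (t.liftN n).liftN m = t.liftN (m + n) :=
  (Function.iterate_add_apply ..).symm

lemma liftN_var (n i : ℕ) : (var i).liftN n = var (i + n) := by
  induction n with
  | zero => rfl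
  | succ n ih => rw [liftN_succ, ih, lift, if_neg (Nat.not_lt_zero _), add_assoc]

lemma lift_liftN (n d : ℕ) (t : JTm) : (t.liftN n).lift (d + n) = (t.lift d).liftN n := by
  induction n with
  | zero => rfl
  | succ n ih => rw [liftN_succ, liftN_succ, ← ih, lift_lift _ (Nat.zero_le _), add_assoc]

lemma subst_liftN (n k : ℕ) (t u : JTm) :
    (t.liftN n).subst (k + n) (u.liftN n) = (t.subst k u).liftN n := by
  induction n with
  | zero => rfl
  | succ n ih =>
    rw [liftN_succ, liftN_succ, liftN_succ, ← ih, lift_subst_of_ge _ _ (Nat.zero_le _), add_assoc]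

lemma subst_liftN_succ (n : ℕ) (t u : JTm) :
    (t.liftN (n + 1)).subst n (u.liftN n) = t.liftN n := by
  simpa only [liftN_succ', zero_add, subst_lift] using subst_liftN n 0 (t.lift 0) u

lemma lift_absN (n d : ℕ) (t : JTm) : (t.absN n).lift d = (t.lift (d + n)).absN n := by
  induction n generalizing d with
  | zero => rfl
  | succ n ih => rw [absN, lift, ih, absN, add_assoc, add_comm 1]

lemma subst_absN (n k : ℕ) (t u : JTm) :
    (t.absN n).subst k u = (t.subst (k + n) (u.liftN n)).absN n := by
  induction n generalizing k u with
  | zero => rfl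
  | succ n ih => rw [absN, subst, ih, absN, liftN_succ', add_assoc, add_comm 1]

lemma absN_absN (m n : ℕ) (t : JTm) : (t.absN n).absN m = t.absN (m + n) := by
  induction m with
  | zero => rw [absN, zero_add]
  | succ m ih => rw [Nat.succ_add, absN, absN, ih]

lemma lift_mkApps (d : ℕ) (h : JTm) (as : List JTm) :
    (h.mkApps as).lift d = (h.lift d).mkApps (as.map (lift d)) := by
  induction as generalizing h with
  | nil => rfl
  | cons a _ ih => exact ih (h.app a)

lemma subst_mkApps (k : ℕ) (u h : JTm) (as : List JTm) :
    (h.mkApps as).subst k u = (h.subst k u).mkApps (as.map (subst · k u)) := by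
  induction as generalizing h with
  | nil => rfl
  | cons a _ ih => exact ih (h.app a)

/-- The variables bound by an abstraction block of length `n`, outermost first, as seen from its
body. -/
def boundVars (n : ℕ) : List JTm := (range n).reverse.map var

lemma boundVars_succ (n : ℕ) : boundVars (n + 1) = var n :: boundVars n := by
  simp [boundVars, range_succ]

lemma lift_boundVars (n d : ℕ) : (boundVars n).map (lift (d + n)) = boundVars n := by
  simp only [boundVars, map_map, map_inj_left, mem_reverse, mem_range, Function.comp_apply]
  intro i hi
  rw [lift, if_pos (by lia)]

lemma subst_boundVars (n k : ℕ) (u : JTm) :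
    (boundVars n).map (subst · (k + n) u) = boundVars n := by
  simp only [boundVars, map_map, map_inj_left, mem_reverse, mem_range, Function.comp_apply]
  intro i hi
  rw [subst, if_neg (by lia), if_neg (by lia)]

lemma boundVars_add (m n : ℕ) :
    boundVars (m + n) = (boundVars m).map (liftN n) ++ boundVars n := by
  induction m with
  | zero => simp [boundVars]
  | succ m ih =>
    rw [Nat.succ_add, boundVars_succ, boundVars_succ, ih, map_cons, liftN_var, cons_append]

lemma jRhs_eq (p : ℕ) (u : JTm) :
    jRhs p u = ((u.liftN p).mkApps ((boundVars p).map (app (app jc nu)))).absN p := by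
  rw [jRhs, boundVars, map_map]; rfl

lemma lift_jRhs (p d : ℕ) (u : JTm) : (jRhs p u).lift d = jRhs p (u.lift d) := by
  have key : ((boundVars p).map (app (app jc nu))).map (lift (d + p)) =
      (boundVars p).map (app (app jc nu)) := by
    conv_rhs => rw [← lift_boundVars p d]
    simp only [map_map]; rfl
  rw [jRhs_eq, jRhs_eq, lift_absN, lift_mkApps, lift_liftN, key]

lemma subst_jRhs (p k : ℕ) (u v : JTm) : (jRhs p u).subst k v = jRhs p (u.subst k v) := by
  have key : ((boundVars p).map (app (app jc nu))).map (subst · (k + p) (v.liftN p)) =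
      (boundVars p).map (app (app jc nu)) := by
    conv_rhs => rw [← subst_boundVars p k (v.liftN p)]
    simp only [map_map]; rfl
  rw [jRhs_eq, jRhs_eq, subst_absN, subst_mkApps, subst_liftN, key]

/-! ### Nice occurrences -/

lemma nice_app_iff {a b : JTm} : Nice (app a b) ↔ (a = jc ∧ b = nu) ∨ (Nice a ∧ Nice b) := by
  cases a <;> cases b <;> simp [Nice]

lemma Nice.lift {t : JTm} (ht : Nice t) (d : ℕ) : Nice (t.lift d) := by
  induction t generalizing d <;> grind [Nice, JTm.lift, nice_app_iff]

lemma Nice.subst {t u : JTm} (ht : Nice t) (hu : Nice u) (k : ℕ) : Nice (t.subst k u) := by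
  induction t generalizing k u <;> grind [Nice, JTm.subst, nice_app_iff, Nice.lift]

lemma Nice.liftN {t : JTm} (ht : Nice t) (n : ℕ) : Nice (t.liftN n) := by
  induction n with
  | zero => exact ht
  | succ n ih => rw [liftN_succ]; exact ih.lift 0

lemma Nice.absN {t : JTm} (ht : Nice t) (n : ℕ) : Nice (t.absN n) := by
  induction n with
  | zero => exact ht
  | succ _ ih => exact ih

lemma Nice.mkApps {h : JTm} {as : List JTm} (hh : Nice h) (has : ∀ a ∈ as, Nice a) :
    Nice (h.mkApps as) := by
  induction as generalizing h with
  | nil => exact hh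
  | cons a as ih =>
    rw [forall_mem_cons] at has
    exact ih (nice_app_iff.2 (.inr ⟨hh, has.1⟩)) has.2

lemma Nice.jRhs {u : JTm} (hu : Nice u) (p : ℕ) : Nice (jRhs p u) := by
  refine ((hu.liftN p).mkApps (forall_mem_map.2 fun i _ ↦ ?_)).absN p
  exact nice_app_iff.2 (.inr ⟨trivial, trivial⟩)

lemma Nice.step {p : ℕ} {t t' : JTm} (ht : Nice t) (h : Step p t t') : Nice t' := by
  induction h with
  | beta a b =>
    obtain ⟨ha, hb⟩ : Nice a ∧ Nice b := ht
    exact ha.subst hb 0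
  | jrule u => exact (nice_app_iff.1 ht).elim (fun h ↦ nomatch h.1) fun h ↦ h.2.jRhs p
  | appL b hs ih =>
    rcases nice_app_iff.1 ht with ⟨rfl, -⟩ | ⟨ha, hb⟩
    · cases hs
    · exact nice_app_iff.2 (.inr ⟨ih ha, hb⟩)
  | appR a hs ih =>
    rcases nice_app_iff.1 ht with ⟨-, rfl⟩ | ⟨ha, hb⟩
    · cases hs
    · exact nice_app_iff.2 (.inr ⟨ha, ih hb⟩)
  | abs _ ih => exact ih ht

lemma Nice.steps {p : ℕ} {t t' : JTm} (ht : Nice t) (h : Steps p t t') : Nice t' := by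
  induction h with
  | refl => exact ht
  | tail _ hs ih => exact ih.step hs

/-! ### Compatibility of reduction -/

section Steps

variable {p : ℕ} {a a' b b' c t t' u u' : JTm}

lemma Steps.refl (t : JTm) : Steps p t t := Relation.ReflTransGen.refl

lemma Steps.trans (h : Steps p a b) (h' : Steps p b c) : Steps p a c :=
  Relation.ReflTransGen.trans h h'

lemma Step.steps (h : Step p a b) : Steps p a b := Relation.ReflTransGen.single h

lemma Steps.map {f : JTm → JTm} (hf : ∀ a b, Step p a b → Step p (f a) (f b))
    (h : Steps p a b) : Steps p (f a) (f b) :=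
  Relation.ReflTransGen.lift f hf a b h

lemma Steps.app (ha : Steps p a a') (hb : Steps p b b') : Steps p (a.app b) (a'.app b') :=
  (ha.map fun _ _ ↦ Step.appL b).trans (hb.map fun _ _ ↦ Step.appR a')

lemma Steps.abs (h : Steps p a a') : Steps p a.abs a'.abs :=
  h.map fun _ _ ↦ Step.abs

lemma Steps.absN (h : Steps p a a') (n : ℕ) : Steps p (a.absN n) (a'.absN n) := by
  induction n with
  | zero => exact h
  | succ _ ih => exact ih.abs

lemma Steps.mkApps_left (h : Steps p a a') (as : List JTm) :
    Steps p (a.mkApps as) (a'.mkApps as) := by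
  induction as generalizing a a' with
  | nil => exact h
  | cons b _ ih => exact ih (h.app (.refl b))

lemma Step.lift (h : Step p t t') (d : ℕ) : Step p (t.lift d) (t'.lift d) := by
  induction h generalizing d with
  | beta a b => rw [lift_subst_of_le _ _ d.zero_le]; exact .beta _ _
  | jrule u => rw [lift_jRhs]; exact .jrule _
  | appL b _ ih => exact .appL _ (ih d)
  | appR a _ ih => exact .appR _ (ih d)
  | abs _ ih => exact .abs (ih (d + 1))

lemma Steps.lift (h : Steps p t t') (d : ℕ) : Steps p (t.lift d) (t'.lift d) :=
  h.map fun _ _ hs ↦ hs.lift d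

lemma Steps.liftN (h : Steps p t t') (n : ℕ) : Steps p (t.liftN n) (t'.liftN n) := by
  induction n with
  | zero => exact h
  | succ n ih => rw [liftN_succ, liftN_succ]; exact ih.lift 0

lemma Step.subst (h : Step p t t') (k : ℕ) (u : JTm) : Step p (t.subst k u) (t'.subst k u) := by
  induction h generalizing k u with
  | beta a b => rw [subst_subst _ _ _ k.zero_le]; exact .beta _ _
  | jrule v => rw [subst_jRhs]; exact .jrule _
  | appL b _ ih => exact .appL _ (ih k u)
  | appR a _ ih => exact .appR _ (ih k u)
  | abs _ ih => exact .abs (ih (k + 1) (u.lift 0))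

lemma Steps.subst_right (t : JTm) (k : ℕ) (h : Steps p u u') :
    Steps p (t.subst k u) (t.subst k u') := by
  induction t generalizing k u u' with
  | var n => simp only [JTm.subst]; split_ifs <;> first | exact h | exact .refl _
  | jc | nu => exact .refl _
  | app a b iha ihb => exact (iha k h).app (ihb k h)
  | abs a ih => exact (ih (k + 1) (h.lift 0)).abs

lemma Steps.subst (ht : Steps p t t') (k : ℕ) (hu : Steps p u u') :
    Steps p (t.subst k u) (t'.subst k u') :=
  (ht.map fun _ _ hs ↦ hs.subst k u).trans (hu.subst_right t' k)

lemma Steps.jRhs (h : Steps p u u') : Steps p (jRhs p u) (jRhs p u') :=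
  ((h.liftN p).mkApps_left _).absN p

end Steps

/-! ### Superdevelopments -/

/-- Application that contracts the redex it creates, if any. -/
def contractApp (p : ℕ) : JTm → JTm → JTm
  | abs c, b => c.subst 0 b
  | app jc nu, b => jRhs p b
  | a, b => app a b

/-- Iterated `contractApp`. -/
def contractApps (p : ℕ) (h : JTm) (as : List JTm) : JTm := as.foldl (contractApp p) h

/-- The complete superdevelopment of a term: all its redexes are contracted from the inside out,
including those created at the head of an application by the contractions inside it. -/
def superdev (p : ℕ) : JTm → JTm
  | var n => var n
  | jc => jc
  | nu => nu
  | app a b => contractApp p (superdev p a) (superdev p b)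
  | abs a => abs (superdev p a)

/-- `a` is inert if no application `a b` is itself a redex. -/
def Inert (a : JTm) : Prop := (∀ c, a ≠ abs c) ∧ a ≠ app jc nu

lemma abs_or_jc_nu_or_inert (a : JTm) : (∃ c, a = abs c) ∨ a = app jc nu ∨ Inert a := by
  grind [Inert]

lemma Inert.contractApp_eq {a : JTm} (ha : Inert a) (p : ℕ) (b : JTm) :
    contractApp p a b = app a b := by
  unfold contractApp
  split
  · exact absurd rfl (ha.1 _)
  · exact absurd rfl ha.2
  · rfl

lemma Inert.lift {a : JTm} (ha : Inert a) (d : ℕ) : Inert (a.lift d) := by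
  cases a <;> grind [Inert, JTm.lift, lift_eq_jc_iff, lift_eq_nu_iff]

section Superdev

variable {p : ℕ} {a a' b b' t t' : JTm}

lemma steps_contractApp (a b : JTm) : Steps p (a.app b) (contractApp p a b) := by
  rcases abs_or_jc_nu_or_inert a with ⟨c, rfl⟩ | rfl | ha
  · exact (Step.beta c b).steps
  · exact (Step.jrule b).steps
  · rw [ha.contractApp_eq]; exact .refl _

lemma Step.contractApp_left (h : Step p a a') (b : JTm) :
    Steps p (contractApp p a b) (contractApp p a' b) := by
  rcases abs_or_jc_nu_or_inert a with ⟨c, rfl⟩ | rfl | ha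
  · cases h with
    | abs h => exact (h.subst 0 b).steps
  · rcases h with _ | _ | ⟨_, ⟨⟩⟩ | ⟨_, ⟨⟩⟩
  · rw [ha.contractApp_eq]
    exact (h.appL b).steps.trans (steps_contractApp a' b)

lemma Steps.contractApp_left (h : Steps p a a') (b : JTm) :
    Steps p (contractApp p a b) (contractApp p a' b) :=
  Relation.ReflTransGen.lift' (contractApp p · b) (fun _ _ hs ↦ hs.contractApp_left b) a a' h

lemma Steps.contractApp_right (a : JTm) (h : Steps p b b') :
    Steps p (contractApp p a b) (contractApp p a b') := by
  rcases abs_or_jc_nu_or_inert a with ⟨c, rfl⟩ | rfl | ha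
  · exact h.subst_right c 0
  · exact h.jRhs
  · rw [ha.contractApp_eq, ha.contractApp_eq]
    exact (Steps.refl a).app h

lemma Steps.contractApp (ha : Steps p a a') (hb : Steps p b b') :
    Steps p (contractApp p a b) (contractApp p a' b') :=
  (ha.contractApp_left b).trans (hb.contractApp_right a')

lemma lift_contractApp (a b : JTm) (d : ℕ) :
    (contractApp p a b).lift d = contractApp p (a.lift d) (b.lift d) := by
  rcases abs_or_jc_nu_or_inert a with ⟨c, rfl⟩ | rfl | ha
  · exact lift_subst_of_le c b d.zero_le
  · exact lift_jRhs p d b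
  · rw [ha.contractApp_eq, (ha.lift d).contractApp_eq, JTm.lift]

lemma subst_contractApp_steps (a b : JTm) (k : ℕ) (u : JTm) :
    Steps p ((contractApp p a b).subst k u) (contractApp p (a.subst k u) (b.subst k u)) := by
  rcases abs_or_jc_nu_or_inert a with ⟨c, rfl⟩ | rfl | ha
  · simp only [contractApp, subst, subst_subst c b u k.zero_le]; exact .refl _
  · simp only [contractApp, subst, subst_jRhs]; exact .refl _
  · rw [ha.contractApp_eq]; exact steps_contractApp _ _

lemma superdev_lift (t : JTm) (d : ℕ) : superdev p (t.lift d) = (superdev p t).lift d := by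
  induction t generalizing d with
  | var n => simp only [lift, superdev]; split_ifs <;> rfl
  | jc | nu => rfl
  | app a b iha ihb => simp only [lift, superdev, iha, ihb, lift_contractApp]
  | abs a ih => simp only [lift, superdev, ih]

lemma superdev_liftN (n : ℕ) (t : JTm) : superdev p (t.liftN n) = (superdev p t).liftN n := by
  induction n with
  | zero => rfl
  | succ n ih => rw [liftN_succ, liftN_succ, superdev_lift, ih]

lemma superdev_absN (n : ℕ) (t : JTm) : superdev p (t.absN n) = (superdev p t).absN n := by
  induction n with
  | zero => rfl
  | succ n ih => rw [absN, superdev, ih, absN]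

lemma superdev_mkApps (h : JTm) (as : List JTm) :
    superdev p (h.mkApps as) = contractApps p (superdev p h) (as.map (superdev p)) := by
  induction as generalizing h with
  | nil => rfl
  | cons a _ ih => exact ih (h.app a)

lemma steps_superdev (t : JTm) : Steps p t (superdev p t) := by
  induction t with
  | var | jc | nu => exact .refl _
  | app a b iha ihb => exact (iha.app ihb).trans (steps_contractApp _ _)
  | abs a ih => exact ih.abs

lemma Steps.mkApps_contractApps {as as' : List JTm} (h : Steps p a a')
    (has : Forall₂ (Steps p) as as') : Steps p (a.mkApps as) (contractApps p a' as') := by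
  induction has generalizing a a' with
  | nil => exact h
  | cons hb _ ih => exact ih ((h.app hb).trans (steps_contractApp _ _))

lemma subst_superdev_steps (t : JTm) (k : ℕ) (u : JTm) :
    Steps p ((superdev p t).subst k (superdev p u)) (superdev p (t.subst k u)) := by
  induction t generalizing k u with
  | var n => simp only [superdev, subst]; split_ifs <;> exact .refl _
  | jc | nu => exact .refl _
  | app a b iha ihb =>
    exact (subst_contractApp_steps _ _ _ _).trans ((iha k u).contractApp (ihb k u))
  | abs a ih =>
    have := ih (k + 1) (u.lift 0)
    rw [superdev_lift] at this
    exact this.abs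

lemma jRhs_superdev_steps (u : JTm) : Steps p (jRhs p (superdev p u)) (superdev p (jRhs p u)) := by
  simp only [jRhs, superdev_absN, superdev_mkApps, superdev_liftN]
  have hargs (as : List JTm) : Forall₂ (Steps p) as (as.map (superdev p)) :=
    forall₂_map_right_iff.2 (forall₂_same.2 fun a _ ↦ steps_superdev a)
  exact (Steps.mkApps_contractApps (.refl _) (hargs _)).absN p

lemma Step.steps_superdev_left (h : Step p t t') : Steps p t' (superdev p t) := by
  induction h with
  | beta a b => exact (steps_superdev a).subst 0 (steps_superdev b)
  | jrule u => exact (steps_superdev u).jRhs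
  | appL b _ ih => exact (ih.app (steps_superdev b)).trans (steps_contractApp _ _)
  | appR a _ ih => exact ((steps_superdev a).app ih).trans (steps_contractApp _ _)
  | abs _ ih => exact ih.abs

lemma Step.superdev_steps (h : Step p t t') : Steps p (superdev p t) (superdev p t') := by
  induction h with
  | beta a b => exact subst_superdev_steps a 0 b
  | jrule u => exact jRhs_superdev_steps u
  | appL b _ ih => exact ih.contractApp_left _
  | appR a _ ih => exact ih.contractApp_right _
  | abs _ ih => exact ih.abs

lemma zProperty_superdev (p : ℕ) : ZProperty (Step p) (superdev p) :=
  fun _ _ h ↦ ⟨h.steps_superdev_left, h.superdev_steps⟩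

end Superdev

/-! ### The sets `E_u` -/

lemma forall₂_boundVars_left_iff {R : JTm → JTm → Prop} {n : ℕ} {as : List JTm} :
    Forall₂ R (boundVars n) as ↔ Forall₂ (fun i a ↦ R (var i) a) (range n).reverse as :=
  forall₂_map_left_iff

namespace EJ

variable {p : ℕ} {u v e : JTm}

lemma lam (n : ℕ) {as : List JTm} (he : EJ p u e) (has : Forall₂ (EJ p) (boundVars n) as) :
    EJ p u (((e.liftN n).mkApps as).absN n) :=
  lamApp n as he (forall₂_boundVars_left_iff.1 has)

@[elab_as_elim]
lemma induction {motive : (u e : JTm) → EJ p u e → Prop} (base : ∀ u, motive u u (.base u))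
    (jnu : ∀ u e (he : EJ p u e), motive u e he → motive u ((jc.app nu).app e) he.jnu)
    (lam : ∀ u e n as (he : EJ p u e) (has : Forall₂ (EJ p) (boundVars n) as), motive u e he →
      Forall₂ (fun v a ↦ ∃ ha : EJ p v a, motive v a ha) (boundVars n) as →
      motive u (((e.liftN n).mkApps as).absN n) (.lam n he has))
    (h : EJ p u e) : motive u e h := by
  refine EJ.rec (motive_1 := motive)
    (motive_2 := fun is as _ ↦
      Forall₂ (fun i a ↦ ∃ ha : EJ p (var i) a, motive (var i) a ha) is as)
    base (fun he ih ↦ jnu _ _ he ih) ?_ .nil (fun ha _ iha ihas ↦ .cons ⟨ha, iha⟩ ihas) h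
  exact fun n as he has ih ihas ↦ lam _ _ n as he (forall₂_boundVars_left_iff.2 has) ih
    (forall₂_boundVars_left_iff.2 ihas)

lemma trans (h : EJ p u v) (h' : EJ p v e) : EJ p u e := by
  induction h' using EJ.induction with
  | base => exact h
  | jnu _ _ _ ih => exact .jnu (ih h)
  | lam _ _ n _ _ has ih => exact .lam n (ih h) has

protected lemma lift (h : EJ p u e) (d : ℕ) : EJ p (u.lift d) (e.lift d) := by
  induction h using EJ.induction generalizing d with
  | base => exact .base _
  | jnu _ _ _ ih => exact .jnu (ih d)
  | lam u e n as _ _ ih ihas =>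
    rw [lift_absN, lift_mkApps, lift_liftN]
    refine .lam n (ih d) ?_
    rw [← lift_boundVars n d, forall₂_map_left_iff, forall₂_map_right_iff]
    exact ihas.imp fun _ _ ⟨_, iha⟩ ↦ iha (d + n)

protected lemma liftN (h : EJ p u e) (n : ℕ) : EJ p (u.liftN n) (e.liftN n) := by
  induction n with
  | zero => exact h
  | succ n ih => rw [liftN_succ, liftN_succ]; exact ih.lift 0

protected lemma subst (h : EJ p u e) (k : ℕ) (w : JTm) : EJ p (u.subst k w) (e.subst k w) := by
  induction h using EJ.induction generalizing k w with
  | base => exact .base _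
  | jnu _ _ _ ih => exact .jnu (ih k w)
  | lam u e n as _ _ ih ihas =>
    rw [subst_absN, subst_mkApps, subst_liftN]
    refine .lam n (ih k w) ?_
    rw [← subst_boundVars n k (w.liftN n), forall₂_map_left_iff, forall₂_map_right_iff]
    exact ihas.imp fun _ _ ⟨_, iha⟩ ↦ iha (k + n) (w.liftN n)

instance : IsTrans JTm (EJ p) := ⟨fun _ _ _ ↦ EJ.trans⟩

lemma jRhs_mem (h : EJ p u e) : EJ p u (jRhs p e) := by
  rw [jRhs_eq]
  exact .lam p h (forall₂_map_right_iff.2 (forall₂_same.2 fun v _ ↦ .jnu (.base v)))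

lemma ne_jc (h : EJ p u e) (hu : u ≠ jc) : e ≠ jc := by
  induction h using EJ.induction with
  | base => exact hu
  | jnu => exact nofun
  | lam u e n as _ has ih =>
    cases n with
    | zero => cases has; exact ih hu
    | succ n => exact nofun

end EJ

/-! ### Occurrences of `ν` -/

section HasNu

variable {p : ℕ} {t u : JTm}

lemma hasNu_lift {d : ℕ} : HasNu (t.lift d) ↔ HasNu t := by
  induction t generalizing d <;> grind [HasNu, JTm.lift]

lemma hasNu_liftN {n : ℕ} : HasNu (t.liftN n) ↔ HasNu t := by
  induction n with
  | zero => rfl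
  | succ n ih => rw [liftN_succ, hasNu_lift, ih]

lemma HasNu.subst (ht : HasNu t) (k : ℕ) (u : JTm) : HasNu (t.subst k u) := by
  induction t generalizing k u <;> grind [HasNu, JTm.subst]

lemma hasNu_absN {n : ℕ} : HasNu (t.absN n) ↔ HasNu t := by
  induction n with
  | zero => rfl
  | succ _ ih => exact ih

lemma hasNu_mkApps {as : List JTm} : HasNu (t.mkApps as) ↔ HasNu t ∨ ∃ a ∈ as, HasNu a := by
  induction as generalizing t with
  | nil => simp [mkApps]
  | cons a as ih => exact ih.trans (by simp [HasNu, or_assoc])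

lemma hasNu_jRhs (hp : 1 ≤ p) (u : JTm) : HasNu (jRhs p u) := by
  rw [jRhs, hasNu_absN, hasNu_mkApps]
  exact .inr ⟨_, mem_map_of_mem (mem_reverse.2 (mem_range.2 hp)), .inl (.inr trivial)⟩

lemma HasNu.contractApp_left (hp : 1 ≤ p) (ht : HasNu t) (u : JTm) :
    HasNu (contractApp p t u) := by
  rcases abs_or_jc_nu_or_inert t with ⟨c, rfl⟩ | rfl | hi
  · exact HasNu.subst (t := c) ht 0 u
  · exact hasNu_jRhs hp u
  · rw [hi.contractApp_eq]; exact .inl ht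

lemma HasNu.contractApps_left (hp : 1 ≤ p) (ht : HasNu t) (as : List JTm) :
    HasNu (contractApps p t as) := by
  induction as generalizing t with
  | nil => exact ht
  | cons a _ ih => exact ih (ht.contractApp_left hp a)

lemma EJ.hasNu (h : EJ p u t) (hu : HasNu u) : HasNu t := by
  induction h using EJ.induction with
  | base => exact hu
  | jnu => exact .inl (.inr trivial)
  | lam _ _ n _ _ _ ih => exact hasNu_absN.2 (hasNu_mkApps.2 (.inl (hasNu_liftN.2 (ih hu))))

end HasNu

/-! ### Spines -/

/-- `a` is neutral if applying it to any number of arguments creates no redex. -/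
def Neutral (a : JTm) : Prop := Inert a ∧ a ≠ jc

section Neutral

variable {p : ℕ} {a h : JTm}

lemma neutral_var (i : ℕ) : Neutral (var i) := ⟨⟨nofun, nofun⟩, nofun⟩

lemma neutral_app (ha : a ≠ jc) (b : JTm) : Neutral (a.app b) :=
  ⟨⟨nofun, fun h ↦ ha (JTm.app.inj h).1⟩, nofun⟩

lemma Neutral.app (ha : Neutral a) (b : JTm) : Neutral (a.app b) := neutral_app ha.2 b

lemma Neutral.mkApps (hh : Neutral h) (as : List JTm) : Neutral (h.mkApps as) := by
  induction as generalizing h with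
  | nil => exact hh
  | cons a _ ih => exact ih (hh.app a)

lemma neutral_mkApps (hh : h ≠ jc) {as : List JTm} (has : as ≠ []) : Neutral (h.mkApps as) := by
  cases as with
  | nil => exact absurd rfl has
  | cons a as => exact (neutral_app hh a).mkApps as

lemma Neutral.lift (ha : Neutral a) (d : ℕ) : Neutral (a.lift d) :=
  ⟨ha.1.lift d, lift_eq_jc_iff.not.2 ha.2⟩

lemma Neutral.contractApps_eq (hh : Neutral h) (as : List JTm) :
    contractApps p h as = h.mkApps as := by
  induction as generalizing h with
  | nil => rfl
  | cons a _ ih =>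
    rw [contractApps, foldl_cons, hh.1.contractApp_eq]
    exact ih (hh.app a)

end Neutral

/-- `Spine p h us T` states that `T = λz⃗.(h c⃗)`, where the arguments `c⃗` lie in `E_u` for `u`
ranging first over `us` and then over the bound variables `z⃗`. These are the shapes taken by an
element `e` of `E_h`, applied to elements of `E_u` for `u` in `us`, when the redexes created at its
head are contracted. The side conditions ensure that no other redex arises there. -/
def Spine (p : ℕ) (h : JTm) (us : List JTm) (T : JTm) : Prop :=
  h ≠ jc ∧ ∃ r cs, T = ((h.liftN r).mkApps cs).absN r ∧
    Forall₂ (EJ p) (us.map (liftN r) ++ boundVars r) cs ∧ (r = 0 → Neutral T)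

lemma contractApp_absN_succ (p r : ℕ) (h a : JTm) (cs : List JTm) :
    contractApp p (((h.liftN (r + 1)).mkApps cs).absN (r + 1)) a =
      ((h.liftN r).mkApps (cs.map (subst · r (a.liftN r)))).absN r := by
  rw [absN, contractApp, subst_absN, zero_add, subst_mkApps, subst_liftN_succ]

section Spine

variable {p : ℕ} {h u a e T : JTm} {us vs as : List JTm}

protected lemma Spine.lift (hT : Spine p h us T) (d : ℕ) :
    Spine p (h.lift d) (us.map (lift d)) (T.lift d) := by
  obtain ⟨hh, r, cs, rfl, hcs, hr⟩ := hT
  refine ⟨lift_eq_jc_iff.not.2 hh, r, cs.map (JTm.lift (d + r)), ?_, ?_, fun h0 ↦ (hr h0).lift d⟩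
  · rw [lift_absN, lift_mkApps, lift_liftN]
  · have hus : (us.map (JTm.lift d)).map (JTm.liftN r) =
        (us.map (JTm.liftN r)).map (JTm.lift (d + r)) := by
      simp only [map_map, map_inj_left, Function.comp_apply, lift_liftN, implies_true]
    rw [hus, ← lift_boundVars r d, ← map_append, forall₂_map_left_iff, forall₂_map_right_iff]
    exact hcs.imp fun _ _ hc ↦ hc.lift (d + r)

protected lemma Spine.liftN (hT : Spine p h us T) (n : ℕ) :
    Spine p (h.liftN n) (us.map (liftN n)) (T.liftN n) := by
  induction n with
  | zero => simpa only [funext liftN_zero, map_id'] using hT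
  | succ n ih => simpa only [map_map, Function.comp_def, ← liftN_succ] using ih.lift 0

lemma EJ.exists_spine (he : EJ p u e) (hu : Neutral u) : ∃ h, EJ p u h ∧ Spine p h [] e := by
  induction he using EJ.induction with
  | base u => exact ⟨u, .base u, hu.2, 0, [], rfl, .nil, fun _ ↦ hu⟩
  | jnu u e he =>
    exact ⟨_, he.jnu, nofun, 0, [], rfl, .nil, fun _ ↦ neutral_app (by nofun) e⟩
  | lam u e n as he has ih =>
    cases n with
    | zero => cases has; exact ih hu
    | succ n => exact ⟨e, he, he.ne_jc hu.2, n + 1, as, rfl, has, nofun⟩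

lemma EJ.forall₂_subst {r : ℕ} {cs : List JTm}
    (hcs : Forall₂ (EJ p) (us.map (JTm.liftN (r + 1)) ++ boundVars (r + 1)) cs) (a : JTm) :
    Forall₂ (EJ p) (us.map (JTm.liftN r) ++ [a.liftN r] ++ boundVars r)
      (cs.map (subst · r (a.liftN r))) := by
  have hus : (us.map (JTm.liftN (r + 1))).map (subst · r (a.liftN r)) = us.map (JTm.liftN r) := by
    simp only [map_map, map_inj_left, Function.comp_apply, subst_liftN_succ, implies_true]
  have hbv : (boundVars (r + 1)).map (subst · r (a.liftN r)) = a.liftN r :: boundVars r := by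
    have := subst_boundVars r 0 (a.liftN r)
    rw [zero_add] at this
    rw [boundVars_succ, map_cons, this, JTm.subst, if_pos rfl]
  rw [append_assoc, singleton_append, ← hus, ← hbv, ← map_append, forall₂_map_left_iff,
    forall₂_map_right_iff]
  exact hcs.imp fun _ _ hc ↦ hc.subst r (a.liftN r)

protected lemma Spine.contractApp (hT : Spine p h us T) (ha : EJ p u a) :
    Spine p h (us ++ [u]) (contractApp p T a) := by
  obtain ⟨hh, r, cs, rfl, hcs, hr⟩ := hT
  cases r with
  | zero =>
    have hT := hr rfl
    refine ⟨hh, 0, cs ++ [a], ?_, ?_, fun _ ↦ ?_⟩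
    · rw [hT.1.contractApp_eq, absN, absN, JTm.mkApps, JTm.mkApps, foldl_concat]
    · simp only [funext liftN_zero, map_id', boundVars, range_zero, reverse_nil, map_nil,
        append_nil] at hcs ⊢
      exact rel_append hcs (.cons ha .nil)
    · rw [hT.1.contractApp_eq]; exact hT.app a
  | succ r =>
    have hcs' : Forall₂ (EJ p) ((us ++ [u]).map (JTm.liftN r) ++ boundVars r)
        (cs.map (subst · r (a.liftN r))) := by
      have hbase (l : List JTm) : Forall₂ (EJ p) l l := forall₂_same.2 fun v _ ↦ .base v
      rw [map_append]
      exact forall₂_trans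
        (rel_append (rel_append (hbase _) (.cons (ha.liftN r) .nil)) (hbase _))
        (EJ.forall₂_subst hcs a)
    rw [contractApp_absN_succ]
    refine ⟨hh, r, _, rfl, hcs', ?_⟩
    rintro rfl
    refine neutral_mkApps hh fun h0 ↦ ?_
    simp [h0] at hcs'

protected lemma Spine.contractApps (hT : Spine p h us T) (has : Forall₂ (EJ p) vs as) :
    Spine p h (us ++ vs) (contractApps p T as) := by
  induction has generalizing us T with
  | nil => rwa [append_nil]
  | cons ha _ ih => exact append_assoc us [_] _ ▸ ih (hT.contractApp ha)

lemma Spine.hasNu_contractApp (hT : Spine p h us T) (ha : HasNu a) :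
    HasNu (contractApp p T a) := by
  obtain ⟨-, r, cs, rfl, hcs, hr⟩ := hT
  cases r with
  | zero => rw [(hr rfl).1.contractApp_eq]; exact .inr ha
  | succ r =>
    obtain ⟨c, hc, hrc⟩ := exists_mem_left_of_forall₂ hcs.flip
      (mem_append_right _ (boundVars_succ r ▸ mem_cons_self))
    have hca : EJ p (a.liftN r) (c.subst r (a.liftN r)) := by
      simpa [JTm.subst] using EJ.subst hrc r (a.liftN r)
    rw [contractApp_absN_succ, hasNu_absN, hasNu_mkApps]
    exact .inr ⟨_, mem_map_of_mem hc, hca.hasNu (hasNu_liftN.2 ha)⟩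

lemma Spine.hasNu_contractApps (hp : 1 ≤ p) (hT : Spine p h us T) (has : Forall₂ (EJ p) vs as)
    (hnu : ∃ a ∈ as, HasNu a) : HasNu (JTm.contractApps p T as) := by
  induction has generalizing us T with
  | nil => simp at hnu
  | cons ha _ ih =>
    rcases (exists_mem_cons_iff ..).1 hnu with ha' | has'
    · exact (hT.hasNu_contractApp ha').contractApps_left hp _
    · exact ih (hT.contractApp ha) has'

end Spine

/-! ### Superdevelopments of correct head normal forms -/

section SuperdevEJ

variable {p : ℕ} {u e : JTm} {n : ℕ} {as : List JTm}

lemma EJ.lam_contractApps (he : EJ p u e) (hu : Neutral u)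
    (has : Forall₂ (EJ p) (boundVars n) as) :
    EJ p u ((contractApps p (e.liftN n) as).absN n) := by
  obtain ⟨h, huh, hs⟩ := he.exists_spine hu
  obtain ⟨-, r, cs, hT, hcs, -⟩ := (hs.liftN n).contractApps has
  rw [map_nil, nil_append, ← boundVars_add] at hcs
  rw [hT, absN_absN, liftN_liftN, add_comm r n]
  exact .lam (n + r) huh hcs

lemma EJ.hasNu_contractApps (hp : 1 ≤ p) (he : EJ p u e) (hu : Neutral u)
    (has : Forall₂ (EJ p) (boundVars n) as) (hnu : ∃ a ∈ as, HasNu a) :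
    HasNu (contractApps p (e.liftN n) as) := by
  obtain ⟨h, -, hs⟩ := he.exists_spine hu
  exact (hs.liftN n).hasNu_contractApps hp has hnu

lemma superdev_lam (n : ℕ) (e : JTm) (as : List JTm) :
    superdev p (((e.liftN n).mkApps as).absN n) =
      (contractApps p ((superdev p e).liftN n) (as.map (superdev p))).absN n := by
  rw [superdev_absN, superdev_mkApps, superdev_liftN]

lemma forall₂_boundVars_map_superdev {R : JTm → JTm → Prop}
    (hR : ∀ i a, R (var i) a → EJ p (var i) (superdev p a)) (has : Forall₂ R (boundVars n) as) :
    Forall₂ (EJ p) (boundVars n) (as.map (superdev p)) := by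
  rw [forall₂_map_right_iff, forall₂_boundVars_left_iff]
  exact (forall₂_boundVars_left_iff.1 has).imp hR

protected lemma EJ.superdev (he : EJ p u e) (hu : Neutral (superdev p u)) :
    EJ p (superdev p u) (superdev p e) := by
  induction he using EJ.induction with
  | base u => exact .base _
  | jnu u e _ ih => exact (ih hu).jRhs_mem
  | lam u e n as _ _ ih ihas =>
    rw [superdev_lam]
    exact (ih hu).lam_contractApps hu
      (forall₂_boundVars_map_superdev (fun i _ ⟨_, iha⟩ ↦ iha (neutral_var i)) ihas)

lemma EJ.forall₂_superdev (has : Forall₂ (EJ p) (boundVars n) as) :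
    Forall₂ (EJ p) (boundVars n) (as.map (superdev p)) :=
  forall₂_boundVars_map_superdev (fun i _ ha ↦ ha.superdev (neutral_var i)) has

lemma EJ.hasNu_superdev (hp : 1 ≤ p) (he : EJ p u e) (hu : Neutral (superdev p u))
    (hnu : HasNu u → HasNu (superdev p u)) (h : HasNu e) : HasNu (superdev p e) := by
  induction he using EJ.induction with
  | base u => exact hnu h
  | jnu u e => exact hasNu_jRhs hp _
  | lam u e n as he has ih ihas =>
    rw [superdev_lam, hasNu_absN]
    rw [hasNu_absN, hasNu_mkApps, hasNu_liftN] at h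
    rcases h with h | ⟨a, ha, hnua⟩
    · exact (hasNu_liftN.2 (ih hu hnu h)).contractApps_left hp _
    · refine (he.superdev hu).hasNu_contractApps hp hu (forall₂_superdev has)
        ⟨_, mem_map_of_mem ha, ?_⟩
      obtain ⟨i, -, _, iha⟩ :=
        exists_mem_left_of_forall₂ (forall₂_boundVars_left_iff.1 ihas) ha
      exact iha (neutral_var i) id hnua

end SuperdevEJ

/-- The head normal forms `λx⃗.(x c⃗ e⃗_y)` that occur in the definition of `Correct`. -/
def CorrectHNF (p : ℕ) (H : JTm) : Prop :=
  ∃ n m k cs es, 1 ≤ k ∧ k ≤ n ∧ H = ((var m).mkApps (cs ++ es)).absN n ∧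
    Forall₂ (EJ p) (boundVars k) es ∧ ∃ e ∈ es, HasNu e

section Correct

variable {p : ℕ} {t t' H : JTm}

lemma correct_iff : Correct p t ↔ Nice t ∧ ∃ H, Steps p t H ∧ CorrectHNF p H := by
  refine and_congr_right fun _ ↦ ⟨?_, ?_⟩
  · rintro ⟨n, m, k, cs, es, hk, -, hkn, hH, hes, hnu⟩
    exact ⟨_, hH, n, m, k, cs, es, hk, hkn, rfl, forall₂_boundVars_left_iff.2 hes, hnu⟩
  · rintro ⟨_, hH, n, m, k, cs, es, hk, hkn, rfl, hes, hnu⟩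
    have hlen : es.length = k := by simpa [boundVars] using hes.length_eq.symm
    exact ⟨n, m, k, cs, es, hk, hlen, hkn, hH, forall₂_boundVars_left_iff.1 hes, hnu⟩

lemma superdev_hnf (n m : ℕ) (as : List JTm) :
    superdev p (((var m).mkApps as).absN n) =
      ((var m).mkApps (as.map (superdev p))).absN n := by
  rw [superdev_absN, superdev_mkApps, superdev, (neutral_var m).contractApps_eq]

lemma CorrectHNF.superdev (hp : 1 ≤ p) (hH : CorrectHNF p H) :
    CorrectHNF p (superdev p H) := by
  obtain ⟨n, m, k, cs, es, hk, hkn, rfl, hes, e, he, hnu⟩ := hH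
  obtain ⟨i, -, hie⟩ := exists_mem_left_of_forall₂ (forall₂_boundVars_left_iff.1 hes) he
  have hnu' : HasNu (JTm.superdev p e) := hie.hasNu_superdev hp (neutral_var i) id hnu
  refine ⟨n, m, k, cs.map (JTm.superdev p), es.map (JTm.superdev p), hk, hkn, ?_,
    EJ.forall₂_superdev hes, _, mem_map_of_mem he, hnu'⟩
  rw [superdev_hnf, map_append]

lemma CorrectHNF.iterate_superdev (hp : 1 ≤ p) (hH : CorrectHNF p H) (n : ℕ) :
    CorrectHNF p ((JTm.superdev p)^[n] H) :=
  Function.Iterate.rec (CorrectHNF p) hH (fun _ h ↦ h.superdev hp) n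

lemma Correct.steps (hp : 1 ≤ p) (ht : Correct p t) (h : Steps p t t') : Correct p t' := by
  rw [correct_iff] at ht ⊢
  obtain ⟨hnice, H, htH, hH⟩ := ht
  obtain ⟨n, hn⟩ := (zProperty_superdev p).exists_iterate_of_reflTransGen h htH
  exact ⟨hnice.steps h, _, hn, hH.iterate_superdev hp n⟩

end Correct

end JTm

open JTm in
theorem nice_correct_preserved_general (p : ℕ) (hp : 1 ≤ p) (t : JTm) :
    (Nice t → ∀ t', Steps p t t' → Nice t') ∧
    (Correct p t → ∀ t', Steps p t t' → Correct p t') :=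
  ⟨fun h _ ht ↦ h.steps ht, fun h _ ht ↦ h.steps hp ht⟩

open JTm in
/-- in the λJ-calculus, let `t` be solvable.  If `ν` occurs nicely in
`t`, it occurs nicely in every reduct of `t`; if `ν` occurs correctly in `t`, it occurs
correctly in every reduct of `t`. -/
theorem nice_correct_preserved (p : ℕ) (hp : 1 ≤ p) (t : JTm)
    (hsolv : Solvable p t) :
    (Nice t → ∀ t', Steps p t t' → Nice t') ∧
    (Correct p t → ∀ t', Steps p t t' → Correct p t') :=
  nice_correct_preserved_general p hp t
end
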